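/- arXiv:2211.08515 — 6 statements merged into one kernel-verified Lean document; each statement's English description precedes it below -/
import Mathlib

section
/- Let p be a prime and let k be an integer with 1 ≤ k ≤ p−1. Integers x₁,…,x_k satisfy the system of k congruences C(2p−2+k, t) + C(2k−2, t)·x₁ + C(2k−3, t)·x₂ + ⋯ + C(k−1, t)·x_k ≡ 0 (mod p) for every t ∈ [0, k−1] if and only if x_s ≡ (−1)^{k−s+1}·C(k, k−s+1) (mod p) for every s ∈ [1, k]. In particular, the solution of this system modulo p is unique. -/
/-!
Reading the `t`-th congruence as the vanishing at `1` of the `t`-th Hasse derivative, the system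
says that `(X - 1) ^ k` divides `X ^ (2 * p - 2 + k) + ∑ s, x_s * X ^ (2 * k - 1 - s)`.
Multiply by `X`, which is coprime to `X - 1`. In characteristic `p`,
`X ^ (2 * p) - 1 = (X ^ 2 - 1) ^ p` is a multiple of `(X - 1) ^ k`, so `X ^ (2 * p)` may be replaced
by `1`; what remains is `X ^ (k - 1)` times `1 + ∑ s, x_s * X ^ (k - s + 1)`. This last polynomial
has degree at most `k` and constant term `1`, hence is divisible by `(X - 1) ^ k` exactly when it
is `(1 - X) ^ k`, and comparing coefficients gives the claim.
-/

section

open Polynomial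

variable {R : Type*} [CommRing R] {k : ℕ}

theorem X_sub_C_pow_dvd_iff_eval_hasseDeriv {f : R[X]} {r : R} :
    (X - C r) ^ k ∣ f ↔ ∀ t < k, (hasseDeriv t f).eval r = 0 := by
  simp only [X_sub_C_pow_dvd_iff, X_pow_dvd_iff, ← taylor_coeff, taylor_apply]

theorem eval_one_hasseDeriv_X_pow {S : Type*} [Semiring S] (n t : ℕ) :
    (hasseDeriv t (X ^ n : S[X])).eval 1 = n.choose t := by
  simp [← monomial_one_right_eq_X_pow, hasseDeriv_monomial]

theorem isCoprime_X_X_sub_one_pow : IsCoprime (X : R[X]) ((X - 1) ^ k) :=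
  IsCoprime.pow_right ⟨1, -1, by ring⟩

theorem coeff_one_sub_X_pow (n : ℕ) :
    ((1 - X : R[X]) ^ k).coeff n = (-1) ^ n * k.choose n := by
  have reflect : (1 - X : R[X]) ^ k = ((1 + X : R[X]) ^ k).comp (C (-1) * X) := by
    simp [sub_eq_add_neg]
  rw [reflect, comp_C_mul_X_coeff, coeff_one_add_X_pow, mul_comm]

theorem natDegree_one_sub_X_pow_le : ((1 - X : R[X]) ^ k).natDegree ≤ k := by
  compute_degree

theorem X_sub_one_pow_dvd_iff_eq_one_sub_X_pow {f : R[X]} (hdeg : f.natDegree ≤ k)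
    (hcoeff : f.coeff 0 = 1) : (X - 1) ^ k ∣ f ↔ f = (1 - X) ^ k := by
  have hself : (X - 1 : R[X]) ^ k ∣ (1 - X) ^ k := pow_dvd_pow_of_dvd ⟨-1, by ring⟩ k
  refine ⟨fun hdvd => ?_, fun h => h ▸ hself⟩
  nontriviality R
  have hX : (X : R[X]) ∣ f - (1 - X) ^ k := by
    simp [X_dvd_iff, hcoeff, coeff_one_sub_X_pow]
  have hprod : X * (X - 1) ^ k ∣ f - (1 - X) ^ k :=
    isCoprime_X_X_sub_one_pow.mul_dvd hX (dvd_sub hdvd hself)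
  have hmonic : (X - 1 : R[X]).Monic := by simpa using monic_X_sub_C (1 : R)
  have hprod_deg : (X * (X - 1 : R[X]) ^ k).natDegree = k + 1 := by
    rw [natDegree_X_mul (hmonic.pow k).ne_zero, hmonic.natDegree_pow, ← C_1, natDegree_X_sub_C,
      mul_one]
  have hdiff_deg : (f - (1 - X) ^ k).natDegree ≤ k :=
    (natDegree_sub_le_of_le hdeg natDegree_one_sub_X_pow_le).trans_eq (max_self k)
  by_contra hne
  exact (monic_X.mul (hmonic.pow k)).not_dvd_of_natDegree_lt (sub_ne_zero.mpr hne)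
    (by omega) hprod

/-- The polynomial `1 + x₁ X ^ k + x₂ X ^ (k - 1) + ⋯ + x_k X` with constant term `1` whose other
coefficients are the unknowns of the linear system, in the (decreasing) order in which the system
lists them. -/
noncomputable def unknownsPolynomial (x : Fin k → R) : R[X] :=
  1 + ∑ i : Fin k, C (x i) * X ^ (k - (i : ℕ))

namespace unknownsPolynomial

variable (x : Fin k → R)

theorem coeff_zero : (unknownsPolynomial x).coeff 0 = 1 := by
  have hpos (i : Fin k) : 0 ≠ k - (i : ℕ) := by omega
  simp [unknownsPolynomial, coeff_X_pow, hpos]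

theorem coeff_sub (i : Fin k) : (unknownsPolynomial x).coeff (k - i) = x i := by
  have hpos : k - (i : ℕ) ≠ 0 := by omega
  have hinj (j : Fin k) : k - (i : ℕ) = k - (j : ℕ) ↔ i = j := by omega
  simp [unknownsPolynomial, coeff_X_pow, coeff_one, hpos, hinj]

theorem natDegree_le : (unknownsPolynomial x).natDegree ≤ k :=
  natDegree_add_le_of_degree_le (by simp) <| natDegree_sum_le_of_forall_le _ _ fun _ _ =>
    (natDegree_C_mul_X_pow_le _ _).trans (Nat.sub_le _ _)

theorem eq_one_sub_X_pow_iff :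
    unknownsPolynomial x = (1 - X) ^ k ↔ ∀ i : Fin k, x i = (-1) ^ (k - (i : ℕ)) *
      (k.choose (k - (i : ℕ)) : R) := by
  refine ⟨fun h i => by rw [← coeff_sub x i, h, coeff_one_sub_X_pow], fun h => ?_⟩
  refine (ext_iff_natDegree_le (natDegree_le x) natDegree_one_sub_X_pow_le).mpr fun n hn => ?_
  obtain rfl | hpos := n.eq_zero_or_pos
  · simp [coeff_zero, coeff_one_sub_X_pow]
  · obtain ⟨i, rfl⟩ : ∃ i : Fin k, n = k - i := ⟨⟨k - n, by omega⟩, (Nat.sub_sub_self hn).symm⟩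
    rw [coeff_sub, h, coeff_one_sub_X_pow]

end unknownsPolynomial

theorem choose_system_iff_X_sub_one_pow_dvd (N : ℕ) {ι : Type*} [Fintype ι] (a : ι → ℕ)
    (x : ι → R) :
    (∀ t < k, (N.choose t : R) + ∑ i, ((a i).choose t : R) * x i = 0) ↔
      (X - 1) ^ k ∣ X ^ N + ∑ i, C (x i) * X ^ a i := by
  rw [← C_1, X_sub_C_pow_dvd_iff_eval_hasseDeriv]
  simp only [map_add, map_sum, C_mul', map_smul, eval_add, eval_finsetSum, eval_smul, smul_eq_mul,
    eval_one_hasseDeriv_X_pow, mul_comm (x _)]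

theorem sub_one_pow_dvd_pow_mul_expChar_pow_sub_one (p : ℕ) [ExpChar R p] {e : ℕ}
    (hk : k ≤ p ^ e) (m : ℕ) (a : R) : (a - 1) ^ k ∣ a ^ (m * p ^ e) - 1 := by
  have hfrobenius : a ^ (m * p ^ e) - 1 = (a ^ m - 1) ^ p ^ e := by
    rw [sub_pow_expChar_pow, one_pow, pow_mul]
  rw [hfrobenius]
  exact (pow_dvd_pow _ hk).trans (pow_dvd_pow_of_dvd (sub_one_dvd_pow_sub_one a m) _)

theorem X_sub_one_pow_dvd_iff_dvd_unknownsPolynomial {M N c : ℕ} (hN : N + 1 = M + c)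
    (hM : (X - 1 : R[X]) ^ k ∣ X ^ M - 1) (x : Fin k → R) :
    (X - 1) ^ k ∣ X ^ N + ∑ i : Fin k, C (x i) * X ^ (c + (k - 1 - (i : ℕ))) ↔
      (X - 1) ^ k ∣ unknownsPolynomial x := by
  have hexp (i : Fin k) : c + (k - 1 - (i : ℕ)) + 1 = c + (k - i) := by omega
  have hshift : X * (X ^ N + ∑ i : Fin k, C (x i) * X ^ (c + (k - 1 - (i : ℕ)))) =
      X ^ c * (X ^ M - 1) + X ^ c * unknownsPolynomial x := by
    simp only [unknownsPolynomial, mul_add, Finset.mul_sum, mul_left_comm _ (C _), ← pow_succ',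
      ← pow_add, hN, hexp]
    ring
  have cancel (n : ℕ) {f : R[X]} : (X - 1) ^ k ∣ X ^ n * f ↔ (X - 1) ^ k ∣ f :=
    ⟨isCoprime_X_X_sub_one_pow.symm.pow_right.dvd_of_dvd_mul_left, (Dvd.dvd.mul_left · _)⟩
  rw [← cancel 1, pow_one, hshift, dvd_add_right (hM.mul_left _), cancel]

theorem stmt_2_general (p : ℕ) [ExpChar R p] {e m c N : ℕ} (hk : k ≤ p ^ e)
    (hN : N + 1 = m * p ^ e + c) (x : Fin k → R) :
    (∀ t < k, (N.choose t : R) +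
        ∑ i : Fin k, ((c + (k - 1 - (i : ℕ))).choose t : R) * x i = 0) ↔
      ∀ i : Fin k, x i = (-1) ^ (k - (i : ℕ)) * (k.choose (k - (i : ℕ)) : R) := by
  rw [choose_system_iff_X_sub_one_pow_dvd, X_sub_one_pow_dvd_iff_dvd_unknownsPolynomial hN
      (sub_one_pow_dvd_pow_mul_expChar_pow_sub_one p hk m X),
    X_sub_one_pow_dvd_iff_eq_one_sub_X_pow (unknownsPolynomial.natDegree_le x)
      (unknownsPolynomial.coeff_zero x), unknownsPolynomial.eq_one_sub_X_pow_iff]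

end

/-- Lemma on the system of linear congruences: `x₁,…,x_k` (indexed here by `i : Fin k`
with `x_s = x ⟨s-1⟩`) satisfy
`C(2p-2+k, t) + ∑_{s=1}^{k} C(2k-1-s, t)·x_s ≡ 0 (mod p)` for all `t ∈ [0, k-1]`
iff `x_s ≡ (-1)^{k-s+1}·C(k, k-s+1) (mod p)` for all `s ∈ [1, k]`. -/
theorem stmt_2 (p k : ℕ) (hp : p.Prime) (hk1 : 1 ≤ k) (hk2 : k ≤ p - 1)
    (x : Fin k → ZMod p) :
    (∀ t : ℕ, t ≤ k - 1 →
        ((2 * p - 2 + k).choose t : ZMod p) +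
          ∑ i : Fin k, ((2 * k - 2 - (i : ℕ)).choose t : ZMod p) * x i = 0) ↔
    (∀ i : Fin k, x i = (-1) ^ (k - (i : ℕ)) * ((k.choose (k - (i : ℕ))) : ZMod p)) := by
  have : ExpChar (ZMod p) p := .prime hp
  have hN : 2 * p - 2 + k + 1 = 2 * p ^ 1 + (k - 1) := by
    have := hp.two_le
    rw [pow_one]
    omega
  have hexp (i : Fin k) : k - 1 + (k - 1 - (i : ℕ)) = 2 * k - 2 - i := by omega
  simpa only [hexp, Nat.lt_iff_le_pred hk1] using
    stmt_2_general p (hk2.trans (by simp)) hN x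
end

section
/- Let p be a prime, let k be an integer with 1 ≤ k ≤ p−1, let G = (ℤ/pℤ) ⊕ (ℤ/pℤ), and let S be a sequence over G of length |S| = 2p−2+k such that S has no nonempty zero-sum subsequence of length at most 2p−1−k. Then S has no zero-sum subsequence whose length lies in [1, 2p−1−k] ∪ [2p, 4p−2k−1]; equivalently, every nonempty zero-sum subsequence of S has length in [2p−k, 2p−1] ∪ [4p−2k, 2p−2+k]. -/
/-! By Chevalley–Warning, every sequence of length `r (p - 1) + 1` over `(ℤ/pℤ)^r` has a nonempty
zero-sum subsequence. Hence a zero-sum sequence with more than `r (p - 1) + 1` terms is the union of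
two nonempty zero-sum sequences: set one term aside and find the first of the two among the others.
If every nonempty zero-sum subsequence of `S` has length at least `m`, a zero-sum subsequence longer
than `r (p - 1) + 1` therefore has length at least `2 * m`. The theorem is the case `r = 2`,
`m = 2 * p - k`. -/

open MvPolynomial Module

theorem exists_ne_zero_forall_eval_eq_zero {K σ κ : Type*} [Field K] [Finite K] [Fintype σ]
    [Fintype κ] {f : κ → MvPolynomial σ K} (hf : ∀ j, eval 0 (f j) = 0)
    (hdeg : ∑ j, (f j).totalDegree < Fintype.card σ) :
    ∃ x ≠ 0, ∀ j, eval x (f j) = 0 := by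
  classical
  have := Fintype.ofFinite K
  let p := ringChar K
  have : Fact p.Prime := ⟨CharP.char_is_prime K p⟩
  let zero : {x : σ → K // ∀ j, eval x (f j) = 0} := ⟨0, hf⟩
  have hdvd := char_dvd_card_solutions_of_fintype_sum_lt p hdeg
  have hcard := (Fact.out : p.Prime).one_lt.trans_le <|
    Nat.le_of_dvd (Fintype.card_pos_iff.2 ⟨zero⟩) hdvd
  obtain ⟨⟨x, hx⟩, hne⟩ := Fintype.exists_ne_of_one_lt_card hcard zero
  exact ⟨x, fun h ↦ hne (Subtype.ext h), hx⟩

section ElementaryAbelian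

variable {p : ℕ} [Fact p.Prime] {ι : Type*} [Fintype ι]

/-- The polynomial `∑ i, b i * X i ^ (p - 1)`. By Fermat's little theorem its value at `x` is the
sum of `b` over the support of `x`, so that its zeros encode zero-sum subfamilies of `b`. -/
noncomputable def subsetSumPolynomial (b : ι → ZMod p) : MvPolynomial ι (ZMod p) :=
  ∑ i, b i • X i ^ (p - 1)

theorem totalDegree_subsetSumPolynomial_le (b : ι → ZMod p) :
    (subsetSumPolynomial b).totalDegree ≤ p - 1 :=
  totalDegree_finsetSum_le fun _ _ ↦ (totalDegree_smul_le ..).trans (totalDegree_X_pow ..).le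

theorem eval_subsetSumPolynomial (b x : ι → ZMod p) :
    eval x (subsetSumPolynomial b) = ∑ i with x i ≠ 0, b i := by
  have : p - 1 ≠ 0 := Nat.sub_ne_zero_of_lt (Fact.out : p.Prime).one_lt
  simp [subsetSumPolynomial, ZMod.pow_card_sub_one, Finset.sum_filter]

variable {V : Type*} [AddCommGroup V] [Module (ZMod p) V] [FiniteDimensional (ZMod p) V]

theorem exists_nonempty_sum_eq_zero (a : ι → V)
    (hι : finrank (ZMod p) V * (p - 1) < Fintype.card ι) :
    ∃ t : Finset ι, t.Nonempty ∧ ∑ i ∈ t, a i = 0 := by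
  let B := finBasis (ZMod p) V
  let f j := subsetSumPolynomial fun i ↦ B.coord j (a i)
  have hdeg : ∑ j, (f j).totalDegree < Fintype.card ι :=
    calc ∑ j, (f j).totalDegree ≤ ∑ _j : Fin (finrank (ZMod p) V), (p - 1) :=
          Finset.sum_le_sum fun _ _ ↦ totalDegree_subsetSumPolynomial_le _
      _ < Fintype.card ι := by simpa using hι
  obtain ⟨x, hx0, hx⟩ := exists_ne_zero_forall_eval_eq_zero
    (fun _ ↦ (eval_subsetSumPolynomial ..).trans (by simp)) hdeg
  obtain ⟨i, hi⟩ := Function.ne_iff.1 hx0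
  refine ⟨({i | x i ≠ 0} : Finset ι), ⟨i, by simpa using hi⟩, ?_⟩
  refine B.forall_coord_eq_zero_iff.1 fun j ↦ ?_
  rw [map_sum, ← eval_subsetSumPolynomial, hx j]

end ElementaryAbelian

/-- Every sequence over `G` of length at least `D` has a nonempty zero-sum subsequence, i.e. the
Davenport constant of `G` is at most `D`. -/
def HasDavenportBound (G : Type*) [AddCommMonoid G] (D : ℕ) : Prop :=
  ∀ S : Multiset G, D ≤ S.card → ∃ T ≤ S, T ≠ 0 ∧ T.sum = 0

theorem hasDavenportBound_of_finiteDimensional (p : ℕ) [Fact p.Prime] (V : Type*) [AddCommGroup V]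
    [Module (ZMod p) V] [FiniteDimensional (ZMod p) V] :
    HasDavenportBound V (finrank (ZMod p) V * (p - 1) + 1) := by
  classical
  intro S hS
  let term (x : S) : V := x
  obtain ⟨t, ht, hsum⟩ := exists_nonempty_sum_eq_zero term (by simpa using hS)
  refine ⟨t.val.map term, ?_, by simpa using ht.ne_empty, hsum⟩
  calc t.val.map term ≤ (Finset.univ : Finset S).val.map term :=
        Multiset.map_le_map (Finset.val_le_iff.2 t.subset_univ)
    _ = S := S.map_univ_coe

namespace HasDavenportBound

variable {G : Type*} [AddCommMonoid G] {D : ℕ}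

theorem exists_add_eq_of_sum_eq_zero (hD : HasDavenportBound G D) {T : Multiset G}
    (hsum : T.sum = 0) (hT : D < T.card) :
    ∃ U V : Multiset G, U + V = T ∧ U ≠ 0 ∧ V ≠ 0 ∧ U.sum = 0 ∧ V.sum = 0 := by
  obtain ⟨g, hg⟩ := Multiset.card_pos_iff_exists_mem.1 (Nat.zero_lt_of_lt hT)
  obtain ⟨R, rfl⟩ := Multiset.exists_cons_of_mem hg
  obtain ⟨U, hUR, hU0, hU⟩ := hD R (by simpa [Nat.lt_succ_iff] using hT)
  obtain ⟨V, rfl⟩ := Multiset.le_iff_exists_add.1 hUR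
  refine ⟨U, g ::ₘ V, Multiset.add_cons g U V, hU0, Multiset.cons_ne_zero, hU, ?_⟩
  simpa [hU] using hsum

theorem two_mul_le_card (hD : HasDavenportBound G D) {T : Multiset G} {m : ℕ}
    (hm : ∀ U ≤ T, U ≠ 0 → U.sum = 0 → m ≤ U.card) (hsum : T.sum = 0) (hT : D < T.card) :
    2 * m ≤ T.card := by
  obtain ⟨U, V, rfl, hU0, hV0, hU, hV⟩ := hD.exists_add_eq_of_sum_eq_zero hsum hT
  calc 2 * m = m + m := two_mul m
    _ ≤ U.card + V.card := add_le_add (hm U (Multiset.le_add_right U V) hU0 hU)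
          (hm V (Multiset.le_add_left V U) hV0 hV)
    _ = (U + V).card := (Multiset.card_add U V).symm

end HasDavenportBound

theorem stmt_3_general (p : ℕ) [Fact p.Prime] {V : Type*} [AddCommGroup V] [Module (ZMod p) V]
    [FiniteDimensional (ZMod p) V] {S : Multiset V} {m : ℕ}
    (hm : ∀ T ≤ S, T ≠ 0 → T.sum = 0 → m ≤ T.card) {T : Multiset V} (hTS : T ≤ S) (hT0 : T ≠ 0)
    (hsum : T.sum = 0) :
    (m ≤ T.card ∧ T.card ≤ finrank (ZMod p) V * (p - 1) + 1) ∨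
      (2 * m ≤ T.card ∧ T.card ≤ S.card) :=
  (le_or_gt T.card (finrank (ZMod p) V * (p - 1) + 1)).imp
    (fun hshort ↦ ⟨hm T hTS hT0 hsum, hshort⟩)
    fun hlong ↦ ⟨(hasDavenportBound_of_finiteDimensional p V).two_mul_le_card
      (fun U hU ↦ hm U (hU.trans hTS)) hsum hlong, Multiset.card_le_card hTS⟩

/-- If `S` over `(ℤ/pℤ)²` has length `2p-2+k` and no nonempty zero-sum subsequence of
length at most `2p-1-k`, then every nonempty zero-sum subsequence of `S` has length in
`[2p-k, 2p-1] ∪ [4p-2k, 2p-2+k]` (equivalently, no zero-sum subsequence has length in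
`[1, 2p-1-k] ∪ [2p, 4p-2k-1]`). -/
theorem stmt_3 (p : ℕ) (hp : p.Prime) (k : ℕ) (hk1 : 1 ≤ k) (hk2 : k ≤ p - 1)
    (S : Multiset (ZMod p × ZMod p)) (hlen : Multiset.card S = 2 * p - 2 + k)
    (hzs : ∀ T ≤ S, T ≠ 0 → Multiset.card T ≤ 2 * p - 1 - k → T.sum ≠ 0) :
    ∀ T ≤ S, T ≠ 0 → T.sum = 0 →
      (2 * p - k ≤ Multiset.card T ∧ Multiset.card T ≤ 2 * p - 1) ∨
      (4 * p - 2 * k ≤ Multiset.card T ∧ Multiset.card T ≤ 2 * p - 2 + k) := by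
  intro T hTS hT0 hsum
  have : Fact p.Prime := ⟨hp⟩
  have hm : ∀ U ≤ S, U ≠ 0 → U.sum = 0 → 2 * p - k ≤ U.card := fun U hUS hU0 hU ↦
    Nat.le_of_not_lt fun hlt ↦ hzs U hUS hU0 (by omega) hU
  have hrank : finrank (ZMod p) (ZMod p × ZMod p) * (p - 1) + 1 = 2 * p - 1 := by
    have := hp.pos
    simp only [finrank_prod, finrank_self]
    omega
  have h := stmt_3_general p hm hTS hT0 hsum
  rw [hrank, hlen] at h
  omega
end

section
/- Let p be a prime, let k be an integer with 1 ≤ k ≤ p−1, let G = (ℤ/pℤ) ⊕ (ℤ/pℤ), let ℓ = 2p−2+k, and let g : Fin ℓ → G be a sequence such that there is no subset I ⊆ Fin ℓ with 1 ≤ |I| ≤ 2p−1−k and ∑_{i∈I} g(i) = 0. Then the number of subsets I ⊆ Fin ℓ with |I| = 2p−1 and ∑_{i∈I} g(i) = 0 is congruent to k modulo p; in particular there are at least k such subsets, and for each such subset I the sequence (g(i))_{i∈I} is a minimal zero-sum sequence (it has no proper nonempty subset J ⊊ I with ∑_{i∈J} g(i) = 0). -/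
/-!
Over a finite field with `q` elements, the indicator of `0` in a `d`-dimensional space is a
polynomial of degree `d (q - 1)`, and an alternating sum over the subsets `I ⊆ T` of a polynomial
of degree less than `#T` in `∑ i ∈ I, g i` vanishes. Since `#I` is itself such a sum (of ones), the
zero-sum subsets `I ⊆ T` satisfy `∑ (-1) ^ #I * w (#I) = 0` for every polynomial weight `w` with
`d (q - 1) + deg w < #T`.

A weight vanishing at every possible size of a nonempty zero-sum subset leaves only the term of `∅`,
which bounds `#T`. If `T` itself were zero-sum with more than `d (p - 1) + 1` elements, then the
complement in `T` of a zero-sum subset would be zero-sum too, hence not short, and the bound would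
fail for `T` with one element removed. A weight vanishing at the possible sizes other than
`d (p - 1) + 1` and `0` then counts the zero-sum subsets with `d (p - 1) + 1` elements modulo `p`.
-/

open Finset Module
open scoped Nat

section AlternatingSums

variable {ι σ R : Type*} [CommRing R]

theorem sum_Icc_neg_one_pow_card_eq_zero [DecidableEq ι] {A T : Finset ι} (h : A ⊂ T) :
    ∑ I ∈ Icc A T, (-1 : R) ^ #I = 0 := by
  have hdisj {B : Finset ι} (hB : B ∈ (T \ A).powerset) : Disjoint A B :=
    disjoint_sdiff.mono_right (mem_powerset.mp hB)
  have hinj : Set.InjOn (A ∪ ·) ((T \ A).powerset : Set (Finset ι)) := by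
    intro B hB C hC hBC
    rw [← union_sdiff_cancel_left (hdisj hB), ← union_sdiff_cancel_left (hdisj hC)]
    exact congrArg (· \ A) hBC
  have hsum : ∑ B ∈ (T \ A).powerset, (-1 : R) ^ #B = 0 := by
    exact_mod_cast congrArg (Int.cast : ℤ → R)
      (sum_powerset_neg_one_pow_card_of_nonempty (sdiff_nonempty.mpr h.2))
  calc ∑ I ∈ Icc A T, (-1 : R) ^ #I
      = ∑ B ∈ (T \ A).powerset, (-1 : R) ^ #A * (-1) ^ #B := by
        rw [Icc_eq_image_powerset h.1, sum_image hinj]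
        exact sum_congr rfl fun B hB => by rw [card_union_of_disjoint (hdisj hB), pow_add]
    _ = 0 := by rw [← mul_sum, hsum, mul_zero]

theorem sum_Icc_neg_one_pow_card_mul_prod_sum_eq_zero [DecidableEq ι] (v : ι → σ → R)
    (m : Multiset σ) (A T : Finset ι) (h : m.card + #A < #T) :
    ∑ I ∈ Icc A T, (-1) ^ #I * (m.map fun s => ∑ i ∈ I, v i s).prod = 0 := by
  induction m using Multiset.induction generalizing A with
  | empty =>
    simp only [Multiset.map_zero, Multiset.prod_zero, mul_one]
    by_cases hAT : A ⊆ T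
    · exact sum_Icc_neg_one_pow_card_eq_zero
        (hAT.ssubset_of_ne (by rintro rfl; simp at h))
    · rw [Icc_eq_empty hAT, sum_empty]
  | cons s m ih =>
    rw [Multiset.card_cons] at h
    -- Expanding the factor of `s` forces one more element `i` into `I`: `A` grows as `m` shrinks.
    calc ∑ I ∈ Icc A T, (-1) ^ #I * ((s ::ₘ m).map fun s => ∑ i ∈ I, v i s).prod
        = ∑ I ∈ Icc A T, ∑ i ∈ I, v i s * ((-1) ^ #I * (m.map fun s => ∑ i ∈ I, v i s).prod) :=
          sum_congr rfl fun I _ => by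
            rw [Multiset.map_cons, Multiset.prod_cons, mul_left_comm, sum_mul]
      _ = ∑ i ∈ T, ∑ I ∈ Icc (insert i A) T,
            v i s * ((-1) ^ #I * (m.map fun s => ∑ i ∈ I, v i s).prod) :=
          sum_comm' fun I i => by
            simp only [mem_Icc, insert_subset_iff]
            tauto
      _ = 0 := sum_eq_zero fun i _ => by
          rw [← mul_sum, ih (insert i A) (by have := card_insert_le i A; omega), mul_zero]

theorem sum_powerset_neg_one_pow_card_mul_eval_sum_eq_zero (f : MvPolynomial σ R) (v : ι → σ → R)
    (T : Finset ι) (h : f.totalDegree < #T) :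
    ∑ I ∈ T.powerset, (-1) ^ #I * MvPolynomial.eval (∑ i ∈ I, v i) f = 0 := by
  classical
  simp only [MvPolynomial.eval_eq, mul_sum]
  rw [sum_comm]
  refine sum_eq_zero fun d hd => ?_
  have hcard : d.toMultiset.card + #(∅ : Finset ι) < #T := by
    rw [card_empty, add_zero, Finsupp.card_toMultiset]
    exact (MvPolynomial.le_totalDegree hd).trans_lt h
  rw [← mul_zero (f.coeff d),
    ← sum_Icc_neg_one_pow_card_mul_prod_sum_eq_zero v d.toMultiset ∅ T hcard, mul_sum]
  refine sum_congr (by ext; simp) fun I _ => ?_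
  simp only [prod_multiset_map_count, Finsupp.toFinset_toMultiset, Finsupp.count_toMultiset,
    Finset.sum_apply, mul_left_comm]

end AlternatingSums

theorem totalDegree_toMvPolynomial_le {σ R : Type*} [CommSemiring R] (i : σ)
    (w : Polynomial R) : (w.toMvPolynomial i).totalDegree ≤ w.natDegree := by
  rw [Polynomial.toMvPolynomial, Polynomial.aeval_eq_sum_range]
  refine MvPolynomial.totalDegree_finsetSum_le fun n hn => ?_
  calc (w.coeff n • MvPolynomial.X (R := R) i ^ n).totalDegree
      ≤ (MvPolynomial.X (R := R) i ^ n).totalDegree := MvPolynomial.totalDegree_smul_le _ _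
    _ ≤ n := by
        rw [MvPolynomial.X_pow_eq_monomial]
        exact (MvPolynomial.totalDegree_monomial_le _ _).trans (by simp)
    _ ≤ w.natDegree := mem_range_succ_iff.mp hn

theorem totalDegree_indicator_le {σ K : Type*} [Fintype σ] [Fintype K] [CommRing K] (a : σ → K) :
    (MvPolynomial.indicator a).totalDegree ≤ Fintype.card σ * (Fintype.card K - 1) :=
  calc (MvPolynomial.indicator a).totalDegree
      ≤ (MvPolynomial.indicator a).degrees.card := MvPolynomial.totalDegree_le_degrees_card _
    _ ≤ (∑ s : σ, (Fintype.card K - 1) • ({s} : Multiset σ)).card :=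
        Multiset.card_le_card (MvPolynomial.degrees_indicator a)
    _ = Fintype.card σ * (Fintype.card K - 1) := by simp

section FiniteField

variable {ι K V : Type*} [Field K] [Fintype K] [AddCommGroup V] [Module K V]
  [Module.Finite K V]

theorem sum_zeroSum_neg_one_pow_card_mul_eval_eq_zero [DecidableEq V] (g : ι → V)
    (w : Polynomial K) (T : Finset ι)
    (h : finrank K V * (Fintype.card K - 1) + w.natDegree < #T) :
    ∑ I ∈ T.powerset with ∑ i ∈ I, g i = 0, (-1) ^ #I * w.eval (#I : K) = 0 := by
  let b := finBasis K V
  let f : MvPolynomial (Option (Fin (finrank K V))) K :=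
    (MvPolynomial.indicator 0).rename some * w.toMvPolynomial none
  let v (i : ι) (s : Option (Fin (finrank K V))) : K := s.elim 1 (b.repr (g i))
  have hdeg : f.totalDegree < #T := by
    refine (MvPolynomial.totalDegree_mul _ _).trans_lt (lt_of_le_of_lt (add_le_add ?_ ?_) h)
    · simpa using (MvPolynomial.totalDegree_rename_le _ _).trans
        (totalDegree_indicator_le (0 : Fin (finrank K V) → K))
    · exact totalDegree_toMvPolynomial_le _ _
  have hcoord (I : Finset ι) : (∑ i ∈ I, v i) ∘ some = b.repr (∑ i ∈ I, g i) := by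
    ext s
    simp [v]
  have heval (I : Finset ι) : MvPolynomial.eval (∑ i ∈ I, v i) f =
      if ∑ i ∈ I, g i = 0 then w.eval (#I : K) else 0 := by
    have hnone : (∑ i ∈ I, v i) none = #I := by simp [v]
    rw [map_mul, MvPolynomial.eval_rename, MvPolynomial.eval_toMvPolynomial, hcoord, hnone]
    split_ifs with h0
    · rw [h0, map_zero, Finsupp.coe_zero, MvPolynomial.eval_indicator_apply_eq_one, one_mul]
    · rw [MvPolynomial.eval_indicator_apply_eq_zero, zero_mul]
      simpa only [Ne, Finsupp.coe_eq_zero, map_eq_zero_iff b.repr b.repr.injective] using h0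
  simpa only [heval, mul_ite, mul_zero, ← sum_filter] using
    sum_powerset_neg_one_pow_card_mul_eval_sum_eq_zero f v T hdeg

/-- For `S = ∅` this is Olson's upper bound for the Davenport constant. -/
theorem card_le_of_zeroSum_card_mem (g : ι → V) (T : Finset ι) (S : Finset ℕ)
    (hS : ∀ n ∈ S, (n : K) ≠ 0)
    (hT : ∀ I ⊆ T, I.Nonempty → ∑ i ∈ I, g i = 0 → #I ∈ S) :
    #T ≤ finrank K V * (Fintype.card K - 1) + #S := by
  classical
  by_contra! hlt
  let w : Polynomial K := ∏ n ∈ S, (Polynomial.X - Polynomial.C (n : K))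
  have hw : w.natDegree = #S := Polynomial.natDegree_finsetProd_X_sub_C_eq_card _ _
  have hsum := sum_zeroSum_neg_one_pow_card_mul_eval_eq_zero g w T (hw ▸ hlt)
  rw [sum_eq_single_of_mem ∅ (by simp)] at hsum
  · rw [card_empty, pow_zero, one_mul, Nat.cast_zero, Polynomial.eval_prod,
      prod_eq_zero_iff] at hsum
    obtain ⟨n, hn, hn0⟩ := hsum
    exact hS n hn (by simpa using hn0)
  · intro I hI hne
    rw [mem_filter, mem_powerset] at hI
    rw [Polynomial.eval_prod, prod_eq_zero (hT I hI.1 (nonempty_iff_ne_empty.mpr hne) hI.2),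
      mul_zero]
    simp

end FiniteField

theorem lt_card_add_of_zeroSum_ssubset {ι G : Type*} [AddCommGroup G] {g : ι → G}
    {T J : Finset ι} {D m : ℕ}
    (hshort : ∀ I ⊆ T, I.Nonempty → #I + m ≤ D → ∑ i ∈ I, g i ≠ 0)
    (hT : ∑ i ∈ T, g i = 0) (hJT : J ⊂ T) (hJ : J.Nonempty) (hJ0 : ∑ i ∈ J, g i = 0) :
    D < #J + m ∧ D + #J < #T + m := by
  classical
  have hsdiff : ∑ i ∈ T \ J, g i = 0 := by rw [sum_sdiff_eq_sub hJT.1, hT, hJ0, sub_zero]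
  have hcard := card_sdiff_add_card_eq_card hJT.1
  have hlt_left := mt (hshort J hJT.1 hJ) (not_not_intro hJ0)
  have hlt_right := mt (hshort (T \ J) sdiff_subset (sdiff_nonempty.mpr hJT.2))
    (not_not_intro hsdiff)
  omega

theorem not_dvd_of_lt_add_of_le_two_mul {p d m n : ℕ} (hmp : m + 1 < p)
    (hm : 2 * m < d * (p - 1)) (hn : d * (p - 1) < n + m) (hn' : n ≤ 2 * m) : ¬ p ∣ n := by
  intro hdvd
  have hn_pos : 0 < n := by omega
  obtain rfl : n = p := by
    obtain ⟨c, rfl⟩ := hdvd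
    have hc : c < 2 := lt_of_mul_lt_mul_left (a := p) (by omega) (Nat.zero_le p)
    obtain rfl : c = 1 := by have := Nat.pos_of_mul_pos_left hn_pos; omega
    exact mul_one p
  have hd : d < 2 := lt_of_mul_lt_mul_right (a := n - 1) (by omega) (Nat.zero_le _)
  interval_cases d <;> omega

section SizeWeight

variable {p d m : ℕ}

/-- The weight `(X + d) (X + d + 1) ⋯ (X + d + m - 1)` that singles out the size `d (p - 1) + 1`:
modulo `p` its roots are the `m` sizes just below it. -/
noncomputable def sizeWeight (p d m : ℕ) : Polynomial (ZMod p) :=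
  (ascPochhammer (ZMod p) m).comp (Polynomial.X + Polynomial.C (d : ZMod p))

theorem natDegree_sizeWeight [Fact p.Prime] : (sizeWeight p d m).natDegree = m := by
  rw [sizeWeight, Polynomial.natDegree_comp, ascPochhammer_natDegree, Polynomial.natDegree_X_add_C,
    mul_one]

theorem eval_sizeWeight (x : ZMod p) :
    (sizeWeight p d m).eval x = (ascPochhammer (ZMod p) m).eval (x + d) := by
  simp [sizeWeight]

theorem eval_sizeWeight_zero : (sizeWeight p d m).eval 0 = (m ! : ZMod p) * d.multichoose m := by
  rw [eval_sizeWeight, zero_add, ← Nat.cast_ascFactorial,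
    Nat.ascFactorial_eq_factorial_mul_choose', ← Nat.multichoose_eq, Nat.cast_mul]

theorem natCast_mul_pred_add_one_add [NeZero p] (d : ℕ) :
    ((d * (p - 1) + 1 : ℕ) : ZMod p) + d = 1 := by
  have hp : ((p - 1 : ℕ) : ZMod p) = -1 := by
    rw [Nat.cast_pred (NeZero.pos p), CharP.cast_eq_zero, zero_sub]
  push_cast [hp]
  ring

theorem eval_sizeWeight_mul_pred_add_one [NeZero p] :
    (sizeWeight p d m).eval ((d * (p - 1) + 1 : ℕ) : ZMod p) = (m ! : ZMod p) := by
  rw [eval_sizeWeight, natCast_mul_pred_add_one_add, ascPochhammer_eval_one]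

theorem eval_sizeWeight_eq_zero [NeZero p] {n : ℕ} (hn : n ≤ d * (p - 1))
    (hnm : d * (p - 1) < n + m) : (sizeWeight p d m).eval (n : ZMod p) = 0 := by
  have hneg : (n : ZMod p) + d = -((d * (p - 1) - n : ℕ) : ZMod p) := by
    have := natCast_mul_pred_add_one_add (p := p) d
    rw [Nat.cast_sub hn]
    push_cast at this ⊢
    linear_combination this
  rw [eval_sizeWeight, hneg, ascPochhammer_eval_neg_coe_nat_of_lt (by omega)]

end SizeWeight

section ElementaryAbelian

variable {p m : ℕ} [Fact p.Prime] {ι V : Type*} [AddCommGroup V]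
  [Module (ZMod p) V] [Module.Finite (ZMod p) V]

theorem card_le_of_zeroSum_of_forall_short {g : ι → V} {T : Finset ι} (hmp : m + 1 < p)
    (hm : 2 * m < finrank (ZMod p) V * (p - 1))
    (hshort : ∀ I ⊆ T, I.Nonempty → #I + m ≤ finrank (ZMod p) V * (p - 1) → ∑ i ∈ I, g i ≠ 0)
    (hcard : #T ≤ finrank (ZMod p) V * (p - 1) + 1 + m) (hT : ∑ i ∈ T, g i = 0) :
    #T ≤ finrank (ZMod p) V * (p - 1) + 1 := by
  classical
  set D := finrank (ZMod p) V * (p - 1)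
  by_contra! hlong
  obtain ⟨x, hx⟩ : T.Nonempty := card_pos.mp (by omega)
  let S := Icc (D + 1 - m) (#T + m - (D + 1))
  have hS : ∀ n ∈ S, (n : ZMod p) ≠ 0 := by
    intro n hn
    rw [mem_Icc] at hn
    rw [Ne, ZMod.natCast_eq_zero_iff]
    exact not_dvd_of_lt_add_of_le_two_mul hmp hm (by omega) (by omega)
  have hsizes : ∀ I ⊆ T.erase x, I.Nonempty → ∑ i ∈ I, g i = 0 → #I ∈ S := by
    intro I hI hne h0
    have := lt_card_add_of_zeroSum_ssubset hshort hT (hI.trans_ssubset (erase_ssubset hx)) hne h0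
    rw [mem_Icc]
    omega
  have hle := card_le_of_zeroSum_card_mem g (T.erase x) S hS hsizes
  rw [card_erase_of_mem hx, ZMod.card, Nat.card_Icc] at hle
  omega

theorem card_zeroSum_modEq_multichoose [DecidableEq V] {g : ι → V} {T : Finset ι} (hmp : m < p)
    (hcard : #T = finrank (ZMod p) V * (p - 1) + 1 + m)
    (hsizes : ∀ I ⊆ T, I.Nonempty → ∑ i ∈ I, g i = 0 →
      finrank (ZMod p) V * (p - 1) < #I + m ∧ #I ≤ finrank (ZMod p) V * (p - 1) + 1) :
    #{I ∈ T.powerset | #I = finrank (ZMod p) V * (p - 1) + 1 ∧ ∑ i ∈ I, g i = 0} ≡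
      (finrank (ZMod p) V).multichoose m [MOD p] := by
  classical
  set d := finrank (ZMod p) V with hd
  set F := {I ∈ T.powerset | #I = d * (p - 1) + 1 ∧ ∑ i ∈ I, g i = 0} with hF
  have hsum := sum_zeroSum_neg_one_pow_card_mul_eval_eq_zero g (sizeWeight p d m) T
    (by rw [natDegree_sizeWeight, ZMod.card, ← hd]; omega)
  have hsub : insert ∅ F ⊆ {I ∈ T.powerset | ∑ i ∈ I, g i = 0} := by
    simp +contextual [subset_iff, hF]
  have hempty : ∅ ∉ F := by simp [hF]
  have hterm : ∀ I ∈ F, (-1) ^ #I * (sizeWeight p d m).eval (#I : ZMod p) = -(m ! : ZMod p) := by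
    intro I hI
    rw [(mem_filter.mp hI).2.1, eval_sizeWeight_mul_pred_add_one, pow_succ, mul_comm d, pow_mul,
      ZMod.pow_card_sub_one_eq_one (neg_ne_zero.mpr one_ne_zero), one_pow, one_mul, neg_one_mul]
  have hother : ∀ I ∈ ({I ∈ T.powerset | ∑ i ∈ I, g i = 0} : Finset (Finset ι)), I ∉ insert ∅ F →
      (-1) ^ #I * (sizeWeight p d m).eval (#I : ZMod p) = 0 := by
    intro I hI hIF
    rw [mem_filter, mem_powerset] at hI
    rw [mem_insert, not_or, ← ne_eq, ← nonempty_iff_ne_empty] at hIF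
    have hne : #I ≠ d * (p - 1) + 1 := fun h =>
      hIF.2 (mem_filter.mpr ⟨mem_powerset.mpr hI.1, h, hI.2⟩)
    have := hsizes I hI.1 hIF.1 hI.2
    rw [eval_sizeWeight_eq_zero (by omega) (by omega), mul_zero]
  rw [← sum_subset hsub hother, sum_insert hempty, sum_congr rfl hterm, sum_const, nsmul_eq_mul,
    card_empty, pow_zero, one_mul, Nat.cast_zero, eval_sizeWeight_zero] at hsum
  have hfact : (m ! : ZMod p) ≠ 0 := by
    rw [Ne, ZMod.natCast_eq_zero_iff, (Fact.out : p.Prime).dvd_factorial]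
    omega
  rw [← ZMod.natCast_eq_natCast_iff]
  exact mul_left_cancel₀ hfact (by linear_combination -hsum)

end ElementaryAbelian

/-- The integer `m` is `k - 1` in `stmt_4`. -/
theorem stmt_4_general {p m : ℕ} [Fact p.Prime] {ι V : Type*} [Fintype ι] [AddCommGroup V]
    [Module (ZMod p) V] [Module.Finite (ZMod p) V] [DecidableEq V] (g : ι → V)
    (hmp : m + 1 < p) (hm : 2 * m < finrank (ZMod p) V * (p - 1))
    (hcard : Fintype.card ι = finrank (ZMod p) V * (p - 1) + 1 + m)
    (hshort : ∀ I : Finset ι, I.Nonempty → #I + m ≤ finrank (ZMod p) V * (p - 1) →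
      ∑ i ∈ I, g i ≠ 0) :
    #{I : Finset ι | #I = finrank (ZMod p) V * (p - 1) + 1 ∧ ∑ i ∈ I, g i = 0} ≡
      (finrank (ZMod p) V).multichoose m [MOD p] ∧
    ∀ I : Finset ι, #I = finrank (ZMod p) V * (p - 1) + 1 → ∑ i ∈ I, g i = 0 →
      ∀ J ⊂ I, J.Nonempty → ∑ i ∈ J, g i ≠ 0 := by
  constructor
  · rw [← powerset_univ]
    refine card_zeroSum_modEq_multichoose (by omega) hcard fun I _ hne h0 => ⟨?_, ?_⟩
    · by_contra! hle
      exact hshort I hne hle h0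
    · exact card_le_of_zeroSum_of_forall_short hmp hm (fun J _ => hshort J)
        (hcard ▸ card_le_univ I) h0
  · intro I hI hI0 J hJI hJ hJ0
    have := lt_card_add_of_zeroSum_ssubset (fun J _ => hshort J) hI0 hJI hJ hJ0
    omega

/-- If `g : Fin (2p-2+k) → (ℤ/pℤ)²` has no nonempty zero-sum subset of size at most
`2p-1-k`, then the number of zero-sum subsets of size `2p-1` is `≡ k (mod p)`; in
particular there are at least `k` of them, and each is a minimal zero-sum sequence. -/
theorem stmt_4 (p k : ℕ) (hp : p.Prime) (hk1 : 1 ≤ k) (hk2 : k ≤ p - 1)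
    (g : Fin (2 * p - 2 + k) → ZMod p × ZMod p)
    (hzs : ∀ I : Finset (Fin (2 * p - 2 + k)), I.Nonempty → I.card ≤ 2 * p - 1 - k →
      ∑ i ∈ I, g i ≠ 0) :
    ((Finset.univ.filter (fun I : Finset (Fin (2 * p - 2 + k)) =>
        I.card = 2 * p - 1 ∧ ∑ i ∈ I, g i = 0)).card ≡ k [MOD p]) ∧
    k ≤ (Finset.univ.filter (fun I : Finset (Fin (2 * p - 2 + k)) =>
        I.card = 2 * p - 1 ∧ ∑ i ∈ I, g i = 0)).card ∧
    (∀ I : Finset (Fin (2 * p - 2 + k)), I.card = 2 * p - 1 → ∑ i ∈ I, g i = 0 →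
      ∀ J ⊂ I, J.Nonempty → ∑ i ∈ J, g i ≠ 0) := by
  have : Fact p.Prime := ⟨hp⟩
  have hp2 := hp.two_le
  have hrank : finrank (ZMod p) (ZMod p × ZMod p) = 2 := by simp
  obtain ⟨m, rfl⟩ : ∃ m, k = m + 1 := ⟨k - 1, by omega⟩
  obtain ⟨hmod, hmin⟩ := stmt_4_general (p := p) (m := m) g (by omega) (by rw [hrank]; omega)
    (by rw [hrank, Fintype.card_fin]; omega)
    fun I hI hIcard => hzs I hI (by rw [hrank] at hIcard; omega)
  have hlen : 2 * (p - 1) + 1 = 2 * p - 1 := by omega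
  rw [hrank, hlen] at hmin
  rw [hrank, hlen, Nat.multichoose_two] at hmod
  refine ⟨hmod, ?_, hmin⟩
  calc m + 1 = _ % p := (Nat.mod_eq_of_lt (by omega)).symm.trans hmod.symm
    _ ≤ _ := Nat.mod_le _ _
end

section
/- Let p be a prime, let k be an integer with 2 ≤ k ≤ p−1, let G = (ℤ/pℤ) ⊕ (ℤ/pℤ), and let S be a sequence over G of length |S| = 2p−2+k such that S has no nonempty zero-sum subsequence of length at most 2p−1−k. Then the sum σ(S) of all terms of S is nonzero. -/
/-!
A polynomial `P` in the variables `xᵢ` of degree less than their number has vanishing alternating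
sum over the cube `{0, 1}^ι`, so it cannot be nonzero at the origin only. Over a field with `q`
elements, the equations saying that the terms selected by `x ∈ {0, 1}^ι` sum to zero are the
nonvanishing of a polynomial of degree `d (q - 1)`, where `d` is the dimension. Multiplying it by
`∏ₐ (∑ xᵢ - a)`, one obtains nonempty zero-sum subsequences whose length avoids prescribed nonzero
residues `a`.

Let `S` over `(ℤ/pℤ)²` be zero-sum with no zero-sum subsequence of length in `[1, p]`. Passing to
complements, its proper nonempty zero-sum subsequences have length strictly between `p` and
`|S| - p`. If `2p ≤ |S| ≤ 3p`, this leaves at most `|S| - 2p` residues, all nonzero; avoiding them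
in `S` minus one term gives a contradiction. If `|S| ≥ 3p - 2`, avoiding all the nonzero residues
in a subsequence of length `3p - 2` gives a zero-sum subsequence of length `2p`, to which the
previous case applies.
-/

open Finset MvPolynomial

section Cube

variable {R ι : Type*} [CommRing R] [Fintype ι]

theorem sum_neg_one_pow_card_mul_prod_indicator_pow_eq_zero {d : ι → ℕ} {i : ι} (hi : d i = 0) :
    ∑ T : Finset ι, (-1) ^ #T * ∏ j, (T : Set ι).indicator (1 : ι → R) j ^ d j = 0 := by
  classical
  have prod_indicator (T : Finset ι) :
      ∏ j, (T : Set ι).indicator (1 : ι → R) j ^ d j = ∏ j ∈ Tᶜ, 0 ^ d j := by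
    rw [← prod_mul_prod_compl T, prod_eq_one fun j hj ↦ by simp [hj], one_mul]
    exact prod_congr rfl fun j hj ↦ by simp [mem_compl.1 hj]
  calc
    _ = ∑ T : Finset ι, (∏ _j ∈ T, (-1 : R)) * ∏ j ∈ Tᶜ, 0 ^ d j := by
      simp only [prod_indicator, prod_const]
    _ = ∏ j, (-1 + 0 ^ d j) := (Fintype.prod_add _ _).symm
    _ = 0 := prod_eq_zero (mem_univ i) (by simp [hi])

theorem sum_neg_one_pow_card_mul_eval_indicator_eq_zero {P : MvPolynomial ι R}
    (hP : P.totalDegree < Fintype.card ι) :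
    ∑ T : Finset ι, (-1) ^ #T * eval ((T : Set ι).indicator 1) P = 0 := by
  simp only [eval_eq', mul_sum]
  rw [sum_comm]
  refine sum_eq_zero fun d hd ↦ ?_
  obtain ⟨i, hi⟩ := exists_degree_lt P 1 (by rwa [one_mul]) hd
  simp only [mul_left_comm _ (coeff d P), ← mul_sum]
  rw [sum_neg_one_pow_card_mul_prod_indicator_pow_eq_zero (Nat.lt_one_iff.1 hi), mul_zero]

theorem exists_nonempty_eval_indicator_ne_zero {P : MvPolynomial ι R}
    (hP : P.totalDegree < Fintype.card ι) (h0 : eval 0 P ≠ 0) :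
    ∃ T : Finset ι, T.Nonempty ∧ eval ((T : Set ι).indicator 1) P ≠ 0 := by
  by_contra! h
  have hsum := sum_neg_one_pow_card_mul_eval_indicator_eq_zero hP
  rw [Fintype.sum_eq_single ∅ fun T hT ↦ by rw [h T (nonempty_iff_ne_empty.2 hT), mul_zero]] at hsum
  exact h0 (by simpa using hsum)

end Cube

section FiniteField

variable {F V : Type*} [Field F] [AddCommGroup V] [Module F V]

theorem exists_totalDegree_le_eval_ne_zero_iff_map_eq_zero [Fintype F] [FiniteDimensional F V]
    {ι : Type*} [Finite ι] (f : (ι → F) →ₗ[F] V) :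
    ∃ P : MvPolynomial ι F, P.totalDegree ≤ Module.finrank F V * (Fintype.card F - 1) ∧
      ∀ x, eval x P ≠ 0 ↔ f x = 0 := by
  classical
  have := Fintype.ofFinite ι
  let b := Module.finBasis F V
  let coordPoly := f.toMvPolynomial (Pi.basisFun F ι) b
  have eval_coordPoly (x : ι → F) (j) : eval x (coordPoly j) = b.repr (f x) j := by
    exact (f.toMvPolynomial_eval_eq_apply (Pi.basisFun F ι) b j ((Pi.basisFun F ι).repr x)).trans
      (by rw [LinearEquiv.symm_apply_apply])
  have eval_factor_ne_zero_iff (x : ι → F) (j) :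
      eval x (1 - coordPoly j ^ (Fintype.card F - 1)) ≠ 0 ↔ b.repr (f x) j = 0 := by
    have exponent_ne_zero : Fintype.card F - 1 ≠ 0 := Nat.sub_ne_zero_of_lt Fintype.one_lt_card
    rw [map_sub, map_one, map_pow, eval_coordPoly]
    by_cases h : b.repr (f x) j = 0
    · simp [h, exponent_ne_zero]
    · simp [h, FiniteField.pow_card_sub_one_eq_one]
  refine ⟨∏ j, (1 - coordPoly j ^ (Fintype.card F - 1)), ?_, fun x ↦ ?_⟩
  · calc
      _ ≤ ∑ j, (1 - coordPoly j ^ (Fintype.card F - 1)).totalDegree := totalDegree_finsetProd _ _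
      _ ≤ ∑ _j : Fin (Module.finrank F V), (Fintype.card F - 1) := by
        refine sum_le_sum fun j _ ↦ (totalDegree_sub _ _).trans (max_le (by simp) ?_)
        exact (totalDegree_pow _ _).trans
          (mul_le_of_le_one_right' (f.toMvPolynomial_totalDegree_le _ b j))
      _ = _ := by simp
  · rw [map_prod, prod_ne_zero_iff, ← b.repr.map_eq_zero_iff, Finsupp.ext_iff]
    simp only [mem_univ, forall_const, eval_factor_ne_zero_iff, Finsupp.coe_zero, Pi.zero_apply]

theorem exists_nonempty_sum_eq_zero_natCast_card_notMem [Fintype F] [FiniteDimensional F V]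
    {ι : Type*} [Fintype ι] (v : ι → V) {A : Finset F} (hA : 0 ∉ A)
    (hcard : Module.finrank F V * (Fintype.card F - 1) + #A < Fintype.card ι) :
    ∃ T : Finset ι, T.Nonempty ∧ ∑ i ∈ T, v i = 0 ∧ (#T : F) ∉ A := by
  classical
  obtain ⟨P, hPdeg, hP⟩ :=
    exists_totalDegree_le_eval_ne_zero_iff_map_eq_zero (Fintype.linearCombination F v)
  let Q : MvPolynomial ι F := ∏ a ∈ A, (∑ i, X i - C a)
  have totalDegree_Q_le : Q.totalDegree ≤ #A := by
    refine (totalDegree_finsetProd _ _).trans ((sum_le_card_nsmul _ _ 1 fun a _ ↦ ?_).trans_eq ?_)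
    · exact (totalDegree_sub_C_le _ _).trans
        (totalDegree_finsetSum_le fun i _ ↦ (totalDegree_X i).le)
    · rw [smul_eq_mul, mul_one]
  have eval_Q_ne_zero_iff (x : ι → F) : eval x Q ≠ 0 ↔ ∑ i, x i ∉ A := by
    simp only [Q, map_prod, map_sub, map_sum, eval_X, eval_C, prod_ne_zero_iff, sub_ne_zero]
    exact ⟨fun h hmem ↦ h _ hmem rfl, fun h a ha heq ↦ h (heq ▸ ha)⟩
  obtain ⟨T, hT, hPQ⟩ := exists_nonempty_eval_indicator_ne_zero (P := P * Q)
    (((totalDegree_mul _ _).trans (add_le_add hPdeg totalDegree_Q_le)).trans_lt hcard) (by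
      rw [map_mul, mul_ne_zero_iff, hP, eval_Q_ne_zero_iff]
      exact ⟨map_zero _, by simpa using hA⟩)
  rw [map_mul, mul_ne_zero_iff, hP, eval_Q_ne_zero_iff, Fintype.linearCombination_apply] at hPQ
  exact ⟨T, hT, by simpa [Set.indicator_apply] using hPQ.1,
    by simpa [Set.indicator_apply] using hPQ.2⟩

theorem exists_le_sum_eq_zero_natCast_card_notMem [Fintype F] [FiniteDimensional F V]
    (S : Multiset V) {A : Finset F} (hA : 0 ∉ A)
    (hcard : Module.finrank F V * (Fintype.card F - 1) + #A < S.card) :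
    ∃ T ≤ S, T ≠ 0 ∧ T.sum = 0 ∧ (T.card : F) ∉ A := by
  classical
  obtain ⟨T, hT, hTsum, hTA⟩ := exists_nonempty_sum_eq_zero_natCast_card_notMem
    (fun x : S ↦ x.1) hA (by rwa [Multiset.card_coe])
  refine ⟨T.val.map fun x : S ↦ x.1, ?_, by simpa using hT.ne_empty, hTsum, by simpa using hTA⟩
  exact (Multiset.map_le_map (Finset.val_le_iff.2 T.subset_univ)).trans_eq S.map_univ_coe

theorem exists_card_le_sum_eq_zero_of_sum_eq_zero [Fintype F] [FiniteDimensional F V]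
    {S : Multiset V} {m : ℕ} (hsum : S.sum = 0)
    (hS : Module.finrank F V * (Fintype.card F - 1) + 1 < S.card)
    (hm : Module.finrank F V * (Fintype.card F - 1) < 2 * m)
    (hcast : ∀ l, m < l → l + m < S.card → (l : F) ≠ 0) :
    ∃ T ≤ S, T ≠ 0 ∧ T.card ≤ m ∧ T.sum = 0 := by
  classical
  by_contra! h
  obtain ⟨a, S', rfl⟩ := (Multiset.card_pos_iff_exists_mem.1 (Nat.zero_lt_of_lt hS)).imp
    fun a ha ↦ Multiset.exists_cons_of_mem ha
  rw [Multiset.card_cons] at hS hcast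
  let A : Finset F := (Ioo m (S'.card + 1 - m)).image (↑)
  have zero_notMem_A : 0 ∉ A := by
    simp only [A, mem_image, mem_Ioo, not_exists, not_and]
    exact fun l hl ↦ hcast l hl.1 (by omega)
  have card_A_le : #A ≤ S'.card + 1 - m - m - 1 := card_image_le.trans_eq (Nat.card_Ioo _ _)
  obtain ⟨T, hTS', hT, hTsum, hTA⟩ :=
    exists_le_sum_eq_zero_natCast_card_notMem S' zero_notMem_A (by omega)
  obtain ⟨U, rfl⟩ := Multiset.le_iff_exists_add.1 hTS'
  have hT_card : m < T.card :=
    not_le.1 fun hle ↦ h T (hTS'.trans (Multiset.le_cons_self _ _)) hT hle hTsum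
  have hU_card : m < (a ::ₘ U).card := by
    refine not_le.1 fun hle ↦ h (a ::ₘ U) ?_ (Multiset.cons_ne_zero) hle ?_
    · exact Multiset.cons_le_cons a (Multiset.le_add_left U T)
    · simpa [hTsum] using hsum
  rw [Multiset.card_cons] at hU_card
  refine hTA (mem_image_of_mem _ (mem_Ioo.2 ⟨hT_card, ?_⟩))
  rw [Multiset.card_add]
  omega

end FiniteField

section RankTwo

variable {p : ℕ} [Fact p.Prime] {V : Type*} [AddCommGroup V] [Module (ZMod p) V]
  [FiniteDimensional (ZMod p) V]

theorem exists_card_le_prime_sum_eq_zero_of_sum_eq_zero (hV : Module.finrank (ZMod p) V ≤ 2)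
    {S : Multiset V} (hsum : S.sum = 0) (hlow : 2 * p ≤ S.card) (hup : S.card ≤ 3 * p) :
    ∃ T ≤ S, T ≠ 0 ∧ T.card ≤ p ∧ T.sum = 0 := by
  have hp := (Fact.out : p.Prime).two_le
  have hrank := Nat.mul_le_mul_right (p - 1) hV
  refine exists_card_le_sum_eq_zero_of_sum_eq_zero (F := ZMod p) hsum ?_ ?_ fun l hpl hl hl0 ↦ ?_
  · rw [ZMod.card]
    omega
  · rw [ZMod.card]
    omega
  · obtain ⟨c, rfl⟩ := (ZMod.natCast_eq_zero_iff l p).1 hl0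
    have one_lt_c : 1 < c := Nat.lt_of_mul_lt_mul_left (a := p) (by omega)
    have c_lt_two : c < 2 := Nat.lt_of_mul_lt_mul_left (a := p) (by omega)
    omega

/-- Olson's bound `η((ℤ/pℤ)²) ≤ 3p - 2`. -/
theorem exists_card_le_prime_sum_eq_zero (hV : Module.finrank (ZMod p) V ≤ 2)
    {S : Multiset V} (hS : 3 * p - 2 ≤ S.card) :
    ∃ T ≤ S, T ≠ 0 ∧ T.card ≤ p ∧ T.sum = 0 := by
  have hp := (Fact.out : p.Prime).two_le
  have hrank := Nat.mul_le_mul_right (p - 1) hV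
  obtain ⟨S', hS'mem⟩ : ∃ S', S' ∈ S.powersetCard (3 * p - 2) := by
    rw [← Multiset.card_pos_iff_exists_mem, Multiset.card_powersetCard]
    exact Nat.choose_pos hS
  obtain ⟨hS'S, hS'⟩ := Multiset.mem_powersetCard.1 hS'mem
  obtain ⟨T, hTS', hT, hTsum, hT_card⟩ :=
    exists_le_sum_eq_zero_natCast_card_notMem S' (A := univ.erase (0 : ZMod p)) (by simp) (by
      rw [card_erase_of_mem (mem_univ _), card_univ, ZMod.card]
      omega)
  obtain ⟨c, hc⟩ : p ∣ T.card := by simpa [ZMod.natCast_eq_zero_iff] using hT_card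
  have hTS := hTS'.trans hS'S
  have card_T_le := Multiset.card_le_card hTS'
  rcases le_or_gt c 1 with hc1 | hc1
  · exact ⟨T, hTS, hT, hc.trans_le (mul_le_of_le_one_right' hc1), hTsum⟩
  · obtain ⟨U, hUT, hU⟩ := exists_card_le_prime_sum_eq_zero_of_sum_eq_zero hV hTsum
      (by rw [hc, mul_comm 2]; exact Nat.mul_le_mul_left p hc1) (by omega)
    exact ⟨U, hUT.trans hTS, hU⟩

theorem stmt_5_general (hV : Module.finrank (ZMod p) V ≤ 2) (S : Multiset V)
    (hlen : 2 * p ≤ S.card) (hzs : ∀ T ≤ S, T ≠ 0 → T.card ≤ p → T.sum ≠ 0) :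
    S.sum ≠ 0 := by
  intro hsum
  obtain ⟨T, hTS, hT, hT_card, hTsum⟩ : ∃ T ≤ S, T ≠ 0 ∧ T.card ≤ p ∧ T.sum = 0 := by
    rcases le_total S.card (3 * p) with hup | hup
    · exact exists_card_le_prime_sum_eq_zero_of_sum_eq_zero hV hsum hlen hup
    · exact exists_card_le_prime_sum_eq_zero hV (by omega)
  exact hzs T hTS hT hT_card hTsum

end RankTwo

/-- If `S` over `(ℤ/pℤ)²` has length `2p-2+k` (with `2 ≤ k ≤ p-1`) and no nonempty
zero-sum subsequence of length at most `2p-1-k`, then `σ(S) ≠ 0`. -/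
theorem stmt_5 (p : ℕ) (hp : p.Prime) (k : ℕ) (hk1 : 2 ≤ k) (hk2 : k ≤ p - 1)
    (S : Multiset (ZMod p × ZMod p)) (hlen : Multiset.card S = 2 * p - 2 + k)
    (hzs : ∀ T ≤ S, T ≠ 0 → Multiset.card T ≤ 2 * p - 1 - k → T.sum ≠ 0) :
    S.sum ≠ 0 := by
  have := Fact.mk hp
  exact stmt_5_general (p := p) (by simp) S (by omega) fun T hTS hT hTp ↦ hzs T hTS hT (by omega)
end

section
/- Let p be a prime, let k be an integer with 1 ≤ k ≤ p−2, let G = (ℤ/pℤ) ⊕ (ℤ/pℤ), and let S be a sequence over G of length |S| = 2p−2+k such that S has no nonempty zero-sum subsequence of length at most 2p−1−k. If (e₁,e₂) is a basis of G and S = e₁^[p−1] · e₂^[p−1] · T for some sequence T over G, then T = (e₁+e₂)^[k], i.e., S = e₁^[p−1] · e₂^[p−1] · (e₁+e₂)^[k]. -/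
/-!
The Davenport constant of `Cₙ ⊕ Cₙ` is `2n - 1`, so a zero-sum sequence of length at least `2n`
splits into two, and one of the halves is short. Work in coordinates with respect to `(e₁, e₂)` and
complete a nonempty subsequence `U` of `T` to a zero-sum sequence by the fewest possible copies of
`e₁` and `e₂`. The length of this completion is at least `2n - k`, and by splitting it does not lie
in `[2n, 3n - k)`, so it is congruent modulo `n` to none of `0, …, n - 1 - k`. On the other hand
it is congruent to `-∑ (x + y - 1)`, the sum running over `(x, y) ∈ U`. So the elements
`x + y - 1`, together with `n - 1 - k` copies of `1`, form a zero-sum free sequence of length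
`n - 1` over `Cₙ`. Such a sequence is constant, hence `x + y = 2` on `T`, and the length of the
completion of a single element then forces `x = y = 1`.

For `n = p` prime the Davenport constant comes from the Chevalley–Warning theorem; the general case
follows by induction on the number of prime factors, along `0 → Cₘ² → Cₚₘ² → Cₚ² → 0`.
-/

open Multiset

variable {G H K : Type*}

section Multiset

variable {α β : Type*}

lemma exists_map_eq_of_le_map {f : α → β} {S : Multiset α} {N : Multiset β} (h : N ≤ S.map f) :
    ∃ U ≤ S, U.map f = N := by
  obtain ⟨V, hV⟩ := Multiset.le_iff_exists_add.1 h
  obtain ⟨U, W, hU, -, rfl⟩ := rel_add_right.1 (rel_map_left.1 (rel_eq.2 hV))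
  exact ⟨U, Multiset.le_add_right U W, rel_eq.1 (rel_map_left.2 hU)⟩

lemma exists_add_eq_of_le_add {A B N : Multiset α} (h : N ≤ A + B) :
    ∃ U ≤ A, ∃ V ≤ B, U + V = N := by
  classical
  refine ⟨N ∩ A, inter_le_right, N - A, Multiset.sub_le_iff_le_add.2 (add_comm A B ▸ h), ?_⟩
  rw [add_comm, sub_add_inter]

lemma exists_le_card_eq {S : Multiset α} {n : ℕ} (h : n ≤ card S) : ∃ R ≤ S, card R = n := by
  obtain ⟨R, hR⟩ := card_pos_iff_exists_mem.1
    ((card_powersetCard n S).symm ▸ Nat.choose_pos h : 0 < card (powersetCard n S))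
  exact ⟨R, mem_powersetCard.1 hR⟩

end Multiset

section ZeroSumFree

/-- A sequence is zero-sum free if none of its nonempty subsequences has sum zero. -/
def IsZeroSumFree [AddCommMonoid G] (S : Multiset G) : Prop :=
  ∀ T ≤ S, T ≠ 0 → T.sum ≠ 0

/-- A sequence with no nonempty zero-sum subsequence of length at most `m`. -/
def IsShortZeroSumFree [AddCommMonoid G] (m : ℕ) (S : Multiset G) : Prop :=
  ∀ T ≤ S, T ≠ 0 → card T ≤ m → T.sum ≠ 0

/-- The bound `D(G) ≤ d + 1` on the Davenport constant of `G`, expressed as `d(G) ≤ d` for the small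
Davenport constant `d(G) = D(G) - 1`, the largest length of a zero-sum free sequence. -/
def SmallDavenportLE (G : Type*) [AddCommMonoid G] (d : ℕ) : Prop :=
  ∀ S : Multiset G, IsZeroSumFree S → card S ≤ d

variable [AddCommMonoid G] [AddCommMonoid H] {S T : Multiset G} {d m : ℕ}

lemma IsZeroSumFree.mono (hS : IsZeroSumFree S) (hTS : T ≤ S) : IsZeroSumFree T :=
  fun U hU => hS U (hU.trans hTS)

lemma IsShortZeroSumFree.of_map (φ : G →+ H) (h : IsShortZeroSumFree m (S.map φ)) :
    IsShortZeroSumFree m S := by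
  intro U hU hU0 hUm hUs
  refine h (U.map φ) (map_le_map hU) (by simpa using hU0) (by simpa using hUm) ?_
  rw [← map_multiset_sum, hUs, φ.map_zero]

lemma SmallDavenportLE.exists_sum_eq_zero (hG : SmallDavenportLE G d) (hS : d < card S) :
    ∃ U ≤ S, U ≠ 0 ∧ U.sum = 0 := by
  by_contra! hfree
  exact hS.not_ge (hG S hfree)

lemma SmallDavenportLE.exists_le_half (hG : SmallDavenportLE G d) (hsum : S.sum = 0)
    (hS : d + 2 ≤ card S) : ∃ U ≤ S, U ≠ 0 ∧ U.sum = 0 ∧ 2 * card U ≤ card S := by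
  obtain ⟨g, hg⟩ := card_pos_iff_exists_mem.1 (by omega : 0 < card S)
  obtain ⟨R, rfl⟩ := exists_cons_of_mem hg
  rw [card_cons] at hS
  obtain ⟨U, hUR, hU0, hUs⟩ := hG.exists_sum_eq_zero (S := R) (by omega)
  obtain ⟨V, rfl⟩ := Multiset.le_iff_exists_add.1 hUR
  rw [← add_cons] at hsum ⊢
  have hVs : (g ::ₘ V).sum = 0 := by rwa [sum_add, hUs, zero_add] at hsum
  rw [card_add]
  rcases le_total (card U) (card (g ::ₘ V)) with hle | hle
  · exact ⟨U, Multiset.le_add_right _ _, hU0, hUs, by omega⟩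
  · exact ⟨g ::ₘ V, Multiset.le_add_left _ _, cons_ne_zero, hVs, by omega⟩

end ZeroSumFree

section Subsums

variable [AddCommGroup G] [DecidableEq G] {S R : Multiset G} {a b x : G}

/-- The set of sums of all subsequences of `S`, including the empty one. -/
def subsums (S : Multiset G) : Finset G :=
  (S.powerset.map Multiset.sum).toFinset

lemma mem_subsums : x ∈ subsums S ↔ ∃ U ≤ S, U.sum = x := by
  simp [subsums]

lemma subsums_mono (h : S ≤ R) : subsums S ⊆ subsums R := by
  intro x hx
  obtain ⟨U, hU, rfl⟩ := mem_subsums.1 hx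
  exact mem_subsums.2 ⟨U, hU.trans h, rfl⟩

lemma image_add_subsums_subset : (subsums S).image (a + ·) ⊆ subsums (a ::ₘ S) := by
  simp only [Finset.image_subset_iff, mem_subsums]
  rintro _ ⟨U, hU, rfl⟩
  exact ⟨a ::ₘ U, cons_le_cons a hU, sum_cons a U⟩

-- Otherwise translation by `a` permutes the finite set `subsums S`, which contains `0`.
lemma card_subsums_lt_card_subsums_cons (h : IsZeroSumFree (a ::ₘ S)) :
    (subsums S).card < (subsums (a ::ₘ S)).card := by
  by_contra! hle
  have hcons : subsums S = subsums (a ::ₘ S) :=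
    Finset.eq_of_subset_of_card_le (subsums_mono (le_cons_self S a)) hle
  have htranslate : (subsums S).image (a + ·) = subsums S :=
    Finset.eq_of_subset_of_card_le (image_add_subsums_subset.trans hcons.superset)
      (Finset.card_image_of_injective _ (add_right_injective a)).ge
  have hzero : 0 ∈ subsums S := mem_subsums.2 ⟨0, Multiset.zero_le S, sum_zero⟩
  obtain ⟨x, hx, hax⟩ := Finset.mem_image.1 (htranslate.symm ▸ hzero)
  obtain ⟨U, hU, rfl⟩ := mem_subsums.1 hx
  exact h (a ::ₘ U) (cons_le_cons a hU) cons_ne_zero (by rw [sum_cons, hax])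

lemma card_subsums_add_card_le (h : IsZeroSumFree (R + S)) :
    (subsums S).card + card R ≤ (subsums (R + S)).card := by
  induction R using Multiset.induction_on with
  | empty => simp
  | cons a R ih =>
    rw [cons_add] at h ⊢
    have hlt := card_subsums_lt_card_subsums_cons h
    have hle := ih (h.mono (le_cons_self _ a))
    rw [card_cons]
    omega

lemma four_le_card_subsums_pair (h : IsZeroSumFree {a, b}) (hab : a ≠ b) :
    4 ≤ (subsums {a, b}).card := by
  have ha : a ≠ 0 := by simpa using h {a} (by simp) (by simp)
  have hb : b ≠ 0 := by simpa using h {b} (by simp) (by simp)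
  have hsum : a + b ≠ 0 := by simpa using h {a, b} le_rfl (by simp)
  have hsub : {0, a, b, a + b} ⊆ subsums {a, b} := by
    simp only [Finset.insert_subset_iff, Finset.singleton_subset_iff, mem_subsums]
    exact ⟨⟨0, by simp⟩, ⟨{a}, by simp⟩, ⟨{b}, by simp⟩, ⟨{a, b}, by simp⟩⟩
  have hcard : ({0, a, b, a + b} : Finset G).card = 4 := by
    simp [Finset.card_insert_of_notMem, ha, hb, hab, ha.symm, hb.symm, hsum.symm]
  exact hcard ▸ Finset.card_le_card hsub

end Subsums

-- Two distinct elements already have four subsums, and each further element adds one more.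
lemma IsZeroSumFree.eq_of_mem [AddCommGroup G] [Fintype G] {S : Multiset G} {a b : G}
    (h : IsZeroSumFree S) (hcard : Fintype.card G ≤ card S + 1) (ha : a ∈ S) (hb : b ∈ S) :
    a = b := by
  classical
  by_contra hab
  obtain ⟨S', rfl⟩ := exists_cons_of_mem ha
  obtain ⟨R, rfl⟩ := exists_cons_of_mem ((mem_cons.1 hb).resolve_left (Ne.symm hab))
  have hsplit : a ::ₘ b ::ₘ R = R + {a, b} := by
    rw [add_comm, insert_eq_cons, cons_add, singleton_add]
  rw [hsplit] at h hcard
  have hpair := four_le_card_subsums_pair (h.mono (Multiset.le_add_left _ R)) hab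
  have hle := card_subsums_add_card_le h
  have huniv := Finset.card_le_univ (subsums (R + {a, b}))
  simp only [card_add, card_pair] at hcard
  omega

section FiniteField

variable {F V : Type*} [Field F] [Fintype F]

open MvPolynomial in
lemma exists_ne_zero_forall_sum_smul_pow_eq_zero {ι σ : Type*} [Fintype ι] [Fintype σ]
    (c : ι → σ → F) (h : Fintype.card ι * (Fintype.card F - 1) < Fintype.card σ) :
    ∃ x : σ → F, x ≠ 0 ∧ ∀ i, ∑ s, c i s * x s ^ (Fintype.card F - 1) = 0 := by
  classical
  set q := Fintype.card F
  have hq : q - 1 ≠ 0 := Nat.sub_ne_zero_of_lt Fintype.one_lt_card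
  obtain ⟨p, hchar⟩ := CharP.exists F
  have hp : p.Prime := CharP.char_is_prime F p
  let f (i : ι) : MvPolynomial σ F := ∑ s, c i s • X s ^ (q - 1)
  have hdeg : ∑ i, (f i).totalDegree < Fintype.card σ := by
    refine (Finset.sum_le_card_nsmul _ _ (q - 1) fun i _ => ?_).trans_lt h
    exact totalDegree_finsetSum_le fun s _ =>
      (totalDegree_smul_le ..).trans (totalDegree_X_pow ..).le
  have hdvd := char_dvd_card_solutions_of_fintype_sum_lt p hdeg
  let zeroSol : {x : σ → F // ∀ i, eval x (f i) = 0} := ⟨0, fun i => by simp [f, hq]⟩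
  have hcard := hp.one_lt.trans_le (Nat.le_of_dvd (Fintype.card_pos_iff.2 ⟨zeroSol⟩) hdvd)
  obtain ⟨⟨x, hx⟩, hx0⟩ := Fintype.exists_ne_of_one_lt_card hcard zeroSol
  refine ⟨x, fun h0 => hx0 (Subtype.ext h0), fun i => ?_⟩
  simpa [f] using hx i

variable (F) [AddCommGroup V] [Module F V] [Module.Finite F V]

-- The powers `x ^ (q - 1)` are the indicator function of a subsequence.
lemma smallDavenportLE_finrank_mul :
    SmallDavenportLE V (Module.finrank F V * (Fintype.card F - 1)) := by
  classical
  intro S hS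
  by_contra! hlt
  let b := Module.finBasis F V
  obtain ⟨x, hx0, hx⟩ := exists_ne_zero_forall_sum_smul_pow_eq_zero
    (fun i (s : S.ToType) => b.repr s.1 i) (by simpa using hlt)
  let I : Finset S.ToType := {s | x s ≠ 0}
  refine hS (I.val.map (·.1)) ?_ ?_ ?_
  · calc I.val.map (·.1) ≤ (Finset.univ : Finset S.ToType).val.map (·.1) :=
          map_le_map (Finset.val_le_iff.2 (Finset.filter_subset _ _))
      _ = S := map_univ_coe S
  · obtain ⟨s, hs⟩ := Function.ne_iff.1 hx0
    have hsI : s ∈ I.val := by simpa [I] using hs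
    exact fun h => (eq_zero_iff_forall_notMem.1 h) _ (mem_map_of_mem _ hsI)
  · have hpow (s : S.ToType) : x s ^ (Fintype.card F - 1) = if x s ≠ 0 then 1 else 0 := by
      split_ifs with hs
      · exact FiniteField.pow_card_sub_one_eq_one _ hs
      · rw [not_not.1 hs, zero_pow (Nat.sub_ne_zero_of_lt Fintype.one_lt_card)]
    refine b.ext_elem fun i => ?_
    calc b.repr (∑ s ∈ I, s.1) i = ∑ s ∈ I, b.repr s.1 i := by
          rw [map_sum, Finsupp.finsetSum_apply]
      _ = ∑ s, b.repr s.1 i * x s ^ (Fintype.card F - 1) := by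
          simp only [I, hpow, Finset.sum_filter, mul_ite, mul_one, mul_zero]
      _ = b.repr 0 i := by rw [hx i, b.repr.map_zero, Finsupp.zero_apply]

end FiniteField

section Blocks

variable [AddCommMonoid G] [AddCommMonoid H] [AddCommMonoid K]

lemma exists_blocks (φ : G →+ H) {ℓ m : ℕ}
    (hH : ∀ R : Multiset H, ℓ ≤ card R → ¬ IsShortZeroSumFree m R) (t : ℕ) (S : Multiset G)
    (hS : ℓ + m * t ≤ card S + m) :
    ∃ B : Multiset (Multiset G), card B = t ∧ B.join ≤ S ∧
      ∀ b ∈ B, b ≠ 0 ∧ card b ≤ m ∧ φ b.sum = 0 := by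
  classical
  induction t generalizing S with
  | zero => exact ⟨0, by simp⟩
  | succ t ih =>
    rw [mul_add_one, ← add_assoc] at hS
    have hshort := hH (S.map φ) (by rw [card_map]; omega)
    simp only [IsShortZeroSumFree, not_forall, not_not] at hshort
    obtain ⟨_, hle, hb0, hbm, hbs⟩ := hshort
    obtain ⟨b, hbS, rfl⟩ := exists_map_eq_of_le_map hle
    rw [card_map] at hbm
    have hbS' := card_le_card hbS
    obtain ⟨B, hBt, hBS, hB⟩ := ih (S - b) (by rw [card_sub hbS]; omega)
    refine ⟨b ::ₘ B, by simp [hBt], ?_, ?_⟩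
    · rw [join_cons]
      exact (Multiset.add_le_add_left hBS).trans (add_tsub_cancel_of_le hbS).le
    · rw [forall_mem_cons]
      exact ⟨⟨by simpa using hb0, hbm, by rw [map_multiset_sum, hbs]⟩, hB⟩

lemma IsZeroSumFree.card_blocks_le {S : Multiset G} (hS : IsZeroSumFree S) {ψ : K →+ G} {d : ℕ}
    (hK : SmallDavenportLE K d) {B : Multiset (Multiset G)} (hBS : B.join ≤ S)
    (hB0 : ∀ b ∈ B, b ≠ 0) (hB : ∀ b ∈ B, b.sum ∈ AddMonoidHom.mrange ψ) : card B ≤ d := by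
  choose! y hy using hB
  rw [← card_map y B]
  refine hK _ fun N hN hN0 hNs => ?_
  obtain ⟨C, hCB, rfl⟩ := exists_map_eq_of_le_map hN
  obtain ⟨D, rfl⟩ := Multiset.le_iff_exists_add.1 hCB
  have hmem {b} (hb : b ∈ C) : b ∈ C + D := mem_add.2 (Or.inl hb)
  refine hS C.join ((Multiset.le_add_right _ D.join).trans (join_add C D ▸ hBS)) ?_ ?_
  · obtain ⟨b, hb⟩ := exists_mem_of_ne_zero (mt (by rintro rfl; rfl) hN0 : C ≠ 0)
    obtain ⟨g, hg⟩ := exists_mem_of_ne_zero (hB0 b (hmem hb))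
    exact fun h => (eq_zero_iff_forall_notMem.1 h) g (mem_join.2 ⟨b, hb, hg⟩)
  · calc C.join.sum = (C.map Multiset.sum).sum := sum_join
      _ = ((C.map y).map ψ).sum := by
        rw [map_map]
        exact congrArg _ (map_congr rfl fun b hb => (hy b (hmem hb)).symm)
      _ = 0 := by rw [← map_multiset_sum, hNs, ψ.map_zero]

lemma exists_blocks_succ (φ : G →+ H) {ℓ m d t : ℕ} {S : Multiset G}
    (hH : ∀ R : Multiset H, ℓ ≤ card R → ¬ IsShortZeroSumFree m R) (hd : SmallDavenportLE H d)
    (hℓS : ℓ + m * t ≤ card S + m) (hdS : d + m * t < card S) :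
    ∃ B : Multiset (Multiset G), card B = t + 1 ∧ B.join ≤ S ∧ ∀ b ∈ B, b ≠ 0 ∧ φ b.sum = 0 := by
  classical
  obtain ⟨B, rfl, hBS, hB⟩ := exists_blocks φ hH t S hℓS
  have hjoin : card B.join ≤ m * card B := by
    have hle : ∀ c ∈ B.map card, c ≤ m := by simpa using fun b hb => (hB b hb).2.1
    rw [card_join, mul_comm]
    simpa using sum_le_card_nsmul _ m hle
  obtain ⟨_, hle, hb0, hbs⟩ := hd.exists_sum_eq_zero (S := (S - B.join).map φ)
    (by rw [card_map, card_sub hBS]; omega)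
  obtain ⟨b, hbS, rfl⟩ := exists_map_eq_of_le_map hle
  refine ⟨b ::ₘ B, card_cons b B, ?_, forall_mem_cons.2 ⟨⟨?_, ?_⟩, fun c hc => ?_⟩⟩
  · rw [join_cons]
    exact (Multiset.add_le_add_right hbS).trans (tsub_add_cancel_of_le hBS).le
  · simpa using hb0
  · rw [map_multiset_sum, hbs]
  · exact ⟨(hB c hc).1, (hB c hc).2.2⟩

end Blocks

section RankTwo

lemma exists_sum_eq_zero_dvd_card (p : ℕ) [Fact p.Prime] {V : Type*} [AddCommGroup V]
    [Module (ZMod p) V] [Module.Finite (ZMod p) V] {S : Multiset V}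
    (hS : (Module.finrank (ZMod p) V + 1) * (p - 1) < card S) :
    ∃ U ≤ S, U ≠ 0 ∧ U.sum = 0 ∧ p ∣ card U := by
  have hD := smallDavenportLE_finrank_mul (ZMod p) (V := V × ZMod p)
  rw [Module.finrank_prod, Module.finrank_self, ZMod.card] at hD
  obtain ⟨N, hN, hN0, hNs⟩ :=
    hD.exists_sum_eq_zero (S := S.map fun v => (v, (1 : ZMod p))) (by rwa [card_map])
  obtain ⟨U, hU, rfl⟩ := exists_map_eq_of_le_map hN
  refine ⟨U, hU, by simpa using hN0, ?_, (ZMod.natCast_eq_zero_iff _ _).1 ?_⟩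
  · simpa [map_multiset_sum] using congrArg (AddMonoidHom.fst V (ZMod p)) hNs
  · simpa [map_multiset_sum] using congrArg (AddMonoidHom.snd V (ZMod p)) hNs

variable {p : ℕ}

lemma smallDavenportLE_zmod_prod_of_prime [Fact p.Prime] :
    SmallDavenportLE (ZMod p × ZMod p) (2 * (p - 1)) := by
  simpa using smallDavenportLE_finrank_mul (ZMod p) (V := ZMod p × ZMod p)

lemma not_isShortZeroSumFree_of_prime [Fact p.Prime] {S : Multiset (ZMod p × ZMod p)}
    (hS : 3 * p - 2 ≤ card S) : ¬ IsShortZeroSumFree p S := by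
  intro hfree
  have hp := (Fact.out : p.Prime).two_le
  obtain ⟨R, hRS, hR⟩ := exists_le_card_eq hS
  obtain ⟨U, hUR, hU0, hUs, c, hc⟩ := exists_sum_eq_zero_dvd_card p (S := R)
    (by rw [Module.finrank_prod, Module.finrank_self]; omega)
  have hUS := hUR.trans hRS
  have hUcard : p * c < p * 3 := by have := card_le_card hUR; omega
  have hc3 : c < 3 := Nat.lt_of_mul_lt_mul_left hUcard
  interval_cases c
  · exact hU0 (card_eq_zero.1 (by simpa using hc))
  · exact hfree U hUS hU0 (by omega) hUs
  · obtain ⟨W, hWU, hW0, hWs, hW⟩ :=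
      smallDavenportLE_zmod_prod_of_prime.exists_le_half hUs (by omega)
    exact hfree W (hWU.trans hUS) hW0 (by omega) hWs

lemma exists_addMonoidHom_ker_castHom_le_range (a b : ℕ) [NeZero (a * b)] :
    ∃ ψ : ZMod b →+ ZMod (a * b),
      (ZMod.castHom (dvd_mul_right a b) (ZMod a)).toAddMonoidHom.ker ≤ ψ.range := by
  let mulLeft : ℤ →+ ZMod (a * b) :=
    (AddMonoidHom.mulLeft (a : ZMod (a * b))).comp (Int.castAddHom _)
  have hmulLeft : mulLeft b = 0 := by simp [mulLeft, ← Nat.cast_mul]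
  refine ⟨ZMod.lift b ⟨mulLeft, hmulLeft⟩, fun x hx => ?_⟩
  have hval : (x.val : ZMod a) = 0 := (ZMod.natCast_val x).trans hx
  obtain ⟨c, hc⟩ := (ZMod.natCast_eq_zero_iff _ _).1 hval
  refine ⟨((c : ℤ) : ZMod b), ?_⟩
  rw [ZMod.lift_coe, ← ZMod.natCast_zmod_val x, hc]
  simp [mulLeft]

lemma smallDavenportLE_zmod_prod_mul {m : ℕ} [Fact p.Prime] [NeZero m]
    (hm : SmallDavenportLE (ZMod m × ZMod m) (2 * (m - 1))) :
    SmallDavenportLE (ZMod (p * m) × ZMod (p * m)) (2 * (p * m - 1)) := by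
  intro S hS
  by_contra! hlt
  have hm0 := NeZero.one_le (n := m)
  have hp := (Fact.out : p.Prime).two_le
  have hpm : p * (2 * m - 2) + 2 * p = 2 * (p * m) := by
    rw [mul_comm 2 p, ← mul_add, Nat.sub_add_cancel (by omega)]
    ring
  let reduce : ZMod (p * m) →+ ZMod p := (ZMod.castHom (dvd_mul_right p m) (ZMod p)).toAddMonoidHom
  obtain ⟨B, hBcard, hBS, hB⟩ := exists_blocks_succ (S := S) (t := 2 * m - 2)
    (reduce.prodMap reduce) (fun _ => not_isShortZeroSumFree_of_prime)
    smallDavenportLE_zmod_prod_of_prime (by omega) (by omega)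
  obtain ⟨ψ, hψ⟩ := exists_addMonoidHom_ker_castHom_le_range p m
  have hrange : ∀ b ∈ B, b.sum ∈ AddMonoidHom.mrange (ψ.prodMap ψ) := fun b hb => by
    obtain ⟨y₁, hy₁⟩ := hψ (congrArg Prod.fst (hB b hb).2)
    obtain ⟨y₂, hy₂⟩ := hψ (congrArg Prod.snd (hB b hb).2)
    exact ⟨(y₁, y₂), Prod.ext hy₁ hy₂⟩
  have hblocks := hS.card_blocks_le hm hBS (fun b hb => (hB b hb).1) hrange
  omega

lemma smallDavenportLE_zmod_prod {n : ℕ} (hn : n ≠ 0) :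
    SmallDavenportLE (ZMod n × ZMod n) (2 * (n - 1)) := by
  induction n using induction_on_primes with
  | zero => exact absurd rfl hn
  | one =>
    intro S hS
    by_contra! hlt
    exact hS S le_rfl (card_pos.1 (by omega)) (Subsingleton.elim _ _)
  | prime_mul p m hp ih =>
    have : Fact p.Prime := ⟨hp⟩
    have : NeZero m := ⟨right_ne_zero_of_mul hn⟩
    exact smallDavenportLE_zmod_prod_mul (ih (NeZero.ne m))

end RankTwo

section Completion

variable {n k : ℕ} {T U : Multiset (ZMod n × ZMod n)} {g : ZMod n × ZMod n}

/-- The zero-sum sequence obtained from `U` by adding as few copies of the standard basis elements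
`(1, 0)` and `(0, 1)` as possible. -/
def zeroSumCompletion (U : Multiset (ZMod n × ZMod n)) : Multiset (ZMod n × ZMod n) :=
  replicate (-U.sum.1).val (1, 0) + replicate (-U.sum.2).val (0, 1) + U

/-- The affine function `(x, y) ↦ x + y - 1`, normalized so that the length of the zero-sum
completion of `U` is congruent to minus the sum of the weights of `U`. -/
def weight (g : ZMod n × ZMod n) : ZMod n :=
  g.1 + g.2 - 1

lemma card_zeroSumCompletion (U : Multiset (ZMod n × ZMod n)) :
    card (zeroSumCompletion U) = (-U.sum.1).val + (-U.sum.2).val + card U := by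
  simp [zeroSumCompletion]

lemma zeroSumCompletion_ne_zero (hU : U ≠ 0) : zeroSumCompletion U ≠ 0 := by
  simp [zeroSumCompletion, hU]

lemma sum_map_weight (U : Multiset (ZMod n × ZMod n)) :
    (U.map weight).sum = U.sum.1 + U.sum.2 - card U := by
  induction U using Multiset.induction_on with
  | empty => simp
  | cons g U ih =>
    simp only [map_cons, sum_cons, ih, weight, Prod.fst_add, Prod.snd_add, card_cons, Nat.cast_succ]
    ring

variable [NeZero n]

lemma sum_zeroSumCompletion (U : Multiset (ZMod n × ZMod n)) : (zeroSumCompletion U).sum = 0 := by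
  ext <;> simp [zeroSumCompletion]

lemma zeroSumCompletion_le (hU : U ≤ T) :
    zeroSumCompletion U ≤ replicate (n - 1) (1, 0) + replicate (n - 1) (0, 1) + T :=
  add_le_add (add_le_add (replicate_mono _ (Nat.le_pred_of_lt (ZMod.val_lt _)))
    (replicate_mono _ (Nat.le_pred_of_lt (ZMod.val_lt _)))) hU

lemma cast_card_zeroSumCompletion (U : Multiset (ZMod n × ZMod n)) :
    (card (zeroSumCompletion U) : ZMod n) = -(U.map weight).sum := by
  rw [card_zeroSumCompletion, sum_map_weight]
  push_cast [ZMod.natCast_zmod_val]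
  ring

section Bounds

variable (h : IsShortZeroSumFree (2 * n - 1 - k)
  (replicate (n - 1) (1, 0) + replicate (n - 1) (0, 1) + T))
include h

lemma two_mul_sub_le_card_zeroSumCompletion (hUT : U ≤ T) (hU : U ≠ 0) :
    2 * n - k ≤ card (zeroSumCompletion U) := by
  by_contra! hlt
  exact h _ (zeroSumCompletion_le hUT) (zeroSumCompletion_ne_zero hU) (by omega)
    (sum_zeroSumCompletion U)

lemma three_mul_sub_le_card_zeroSumCompletion (hk : k < n) (hUT : U ≤ T)
    (hU : 2 * n ≤ card (zeroSumCompletion U)) : 3 * n - k ≤ card (zeroSumCompletion U) := by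
  by_contra! hlt
  have hn := NeZero.one_le (n := n)
  obtain ⟨W, hWU, hW0, hWs, hW⟩ :=
    (smallDavenportLE_zmod_prod (NeZero.ne n)).exists_le_half (sum_zeroSumCompletion U) (by omega)
  exact h W (hWU.trans (zeroSumCompletion_le hUT)) hW0 (by omega) hWs

lemma sub_le_card_zeroSumCompletion_mod (hk : k + 2 ≤ n) (hT : card T ≤ k) (hUT : U ≤ T)
    (hU : U ≠ 0) : n - k ≤ card (zeroSumCompletion U) % n := by
  have hlower := two_mul_sub_le_card_zeroSumCompletion h hUT hU
  have hgap := three_mul_sub_le_card_zeroSumCompletion h (by omega) hUT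
  have hupper : card (zeroSumCompletion U) < 3 * n := by
    have h₁ := ZMod.val_lt (-U.sum.1)
    have h₂ := ZMod.val_lt (-U.sum.2)
    have hUk := (card_le_card hUT).trans hT
    rw [card_zeroSumCompletion]
    omega
  rcases lt_or_ge (card (zeroSumCompletion U)) (2 * n) with hlt | hge
  · rw [Nat.mod_eq_sub_mod (by omega), Nat.mod_eq_of_lt (by omega)]
    omega
  · have := hgap hge
    rw [Nat.mod_eq_sub_mod (by omega), Nat.mod_eq_sub_mod (by omega), Nat.mod_eq_of_lt (by omega)]
    omega

lemma isZeroSumFree_replicate_one_add_map_weight (hk : k + 2 ≤ n) (hT : card T ≤ k) :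
    IsZeroSumFree (replicate (n - 1 - k) 1 + T.map weight) := by
  intro N hN hN0 hNs
  obtain ⟨R, hR, W, hW, rfl⟩ := exists_add_eq_of_le_add hN
  obtain ⟨r, hr, rfl⟩ := le_replicate_iff.1 hR
  obtain ⟨U, hUT, rfl⟩ := exists_map_eq_of_le_map hW
  have hcard : (r : ZMod n) = card (zeroSumCompletion U) := by
    rw [cast_card_zeroSumCompletion]
    simpa [eq_neg_iff_add_eq_zero] using hNs
  rw [ZMod.natCast_eq_natCast_iff', Nat.mod_eq_of_lt (by omega)] at hcard
  by_cases hU : U = 0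
  · have hr0 : r = 0 := by simpa [hU, zeroSumCompletion] using hcard
    exact hN0 (by simp [hr0, hU])
  · have hmod := sub_le_card_zeroSumCompletion_mod h hk hT hUT hU
    omega

lemma weight_eq_one (hk : k + 2 ≤ n) (hT : card T = k) (hg : g ∈ T) : weight g = 1 := by
  refine (isZeroSumFree_replicate_one_add_map_weight h hk hT.le).eq_of_mem ?_
    (mem_add.2 (Or.inr (mem_map_of_mem weight hg)))
    (mem_add.2 (Or.inl (mem_replicate.2 ⟨by omega, rfl⟩)))
  rw [ZMod.card, card_add, card_replicate, card_map]
  omega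

lemma eq_one_of_mem (hk : k + 2 ≤ n) (hT : card T = k) (hg : g ∈ T) : g = 1 := by
  have hlower := two_mul_sub_le_card_zeroSumCompletion h (singleton_le.2 hg) (singleton_ne_zero g)
  have hmod : ((card (zeroSumCompletion {g}) + 1 : ℕ) : ZMod n) = 0 := by
    rw [Nat.cast_succ, cast_card_zeroSumCompletion, map_singleton, sum_singleton,
      weight_eq_one h hk hT hg, neg_add_cancel]
  obtain ⟨c, hc⟩ := (ZMod.natCast_eq_zero_iff _ _).1 hmod
  have hc2 : 2 ≤ c := by
    by_contra! hlt
    have := Nat.mul_le_mul_left n (Nat.le_of_lt_succ hlt)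
    omega
  have hlong := Nat.mul_le_mul_left n hc2
  rw [card_zeroSumCompletion, sum_singleton, card_singleton] at hc
  have h₁ := ZMod.val_lt (-g.1)
  have h₂ := ZMod.val_lt (-g.2)
  have eq_one {x : ZMod n} (hx : (-x).val + 1 = n) : x = 1 := by
    have := congrArg (Nat.cast : ℕ → ZMod n) hx
    rw [Nat.cast_succ, ZMod.natCast_zmod_val, ZMod.natCast_self] at this
    linear_combination -this
  exact Prod.ext (eq_one (by omega)) (eq_one (by omega))

end Bounds

end Completion

theorem stmt_6_general (n : ℕ) (k : ℕ) (hk : k + 2 ≤ n)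
    (S : Multiset (ZMod n × ZMod n)) (hlen : Multiset.card S = 2 * n - 2 + k)
    (hzs : IsShortZeroSumFree (2 * n - 1 - k) S)
    (e₁ e₂ : ZMod n × ZMod n)
    (hbasis : Function.Bijective (fun ab : ZMod n × ZMod n => ab.1 • e₁ + ab.2 • e₂))
    (T : Multiset (ZMod n × ZMod n))
    (hform : S = Multiset.replicate (n - 1) e₁ + Multiset.replicate (n - 1) e₂ + T) :
    T = Multiset.replicate k (e₁ + e₂) := by
  have : NeZero n := ⟨by omega⟩
  let φ := (LinearMap.toSpanSingleton (ZMod n) _ e₁).coprod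
    (LinearMap.toSpanSingleton (ZMod n) _ e₂)
  obtain ⟨T, rfl⟩ := map_surjective_of_surjective (f := φ) hbasis.surjective T
  have hT : card T = k := by
    simp only [hform, card_add, card_replicate, card_map] at hlen
    omega
  have hS : S = (replicate (n - 1) (1, 0) + replicate (n - 1) (0, 1) + T).map φ := by
    simp [hform, φ]
  have hcoord := IsShortZeroSumFree.of_map φ.toAddMonoidHom (hS ▸ hzs)
  have hTone : T = replicate k 1 := eq_replicate.2 ⟨hT, fun g => eq_one_of_mem hcoord hk hT⟩
  simp [hTone, φ]

/-- If `S` over `(ℤ/pℤ)²` has length `2p-2+k` (with `1 ≤ k ≤ p-2`), no nonempty zero-sum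
subsequence of length at most `2p-1-k`, and `S = e₁^[p-1] · e₂^[p-1] · T` for a basis
`(e₁, e₂)`, then `T = (e₁+e₂)^[k]`. -/
theorem stmt_6 (p : ℕ) (hp : p.Prime) (k : ℕ) (hk1 : 1 ≤ k) (hk2 : k ≤ p - 2)
    (S : Multiset (ZMod p × ZMod p)) (hlen : Multiset.card S = 2 * p - 2 + k)
    (hzs : ∀ T ≤ S, T ≠ 0 → Multiset.card T ≤ 2 * p - 1 - k → T.sum ≠ 0)
    (e₁ e₂ : ZMod p × ZMod p)
    (hbasis : Function.Bijective (fun ab : ZMod p × ZMod p => ab.1 • e₁ + ab.2 • e₂))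
    (T : Multiset (ZMod p × ZMod p))
    (hform : S = Multiset.replicate (p - 1) e₁ + Multiset.replicate (p - 1) e₂ + T) :
    T = Multiset.replicate k (e₁ + e₂) :=
  stmt_6_general p k (by have := hp.two_le; omega) S hlen hzs e₁ e₂ hbasis T hform
end

section
/- Let p be a prime, let G = (ℤ/pℤ) ⊕ (ℤ/pℤ) ⊕ (ℤ/pℤ), and let S be a minimal zero-sum sequence over G of length 3p−2. If there is an element e₁ ∈ G whose multiplicity in S is at least p−1, then there exist e₂, e₃ ∈ G such that (e₁,e₂,e₃) is a basis of G and there exist α₁,…,α_{p−1} ∈ ℤ/pℤ and β₁,…,β_p, γ₁,…,γ_p ∈ ℤ/pℤ with S = e₁^[p−1] · ∏_{i=1}^{p−1}(α_i·e₁ + e₂) · ∏_{i=1}^{p}(β_i·e₁ + γ_i·e₂ + e₃), where ∑_{i=1}^{p−1} α_i + ∑_{i=1}^{p} β_i = 1 and ∑_{i=1}^{p} γ_i = 1 in ℤ/pℤ. -/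
/-!
Modulo `e₁` the remaining `2p - 1` terms form a minimal zero-sum sequence `g` over the plane
`V = G ⧸ ⟨e₁⟩`, and it suffices to show that `p - 1` terms of `g` coincide and that the others lie
on one line parallel to their common value.

The `(2p - 1)`-st power of the augmentation ideal of the group algebra of `V` vanishes, and the
product of the `e_{g i} - 1` over a zero-sum free subfamily has constant coefficient `± 1`.
Therefore the product over all but two terms of `g`, multiplied by `e_h - 1`, has a constant
coefficient that is linear in `h` and equal to `1` at the two missing terms; leaving out three terms
gives a symmetric bilinear form `Q` equal to `1` at each pair of missing terms. Comparing the
products for the rescaled sequences `g`, `2g` and `-g` determines moreover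
`∑ Q (g l) (g l)`. Since there are only `p + 1` lines, some term of `g` is repeated. In coordinates
adapted to it these facts become polynomial relations between pairs of terms, which force `p - 1`
terms to coincide; the linear forms then put the other terms on a line.
-/

open Finset
open scoped AddMonoidAlgebra

lemma zmod_two_ne_zero {p : ℕ} [Fact p.Prime] (hp : p ≠ 2) : (2 : ZMod p) ≠ 0 :=
  Ring.two_ne_zero (by rwa [ZMod.ringChar_zmod_n])

section Sequences

variable {V ι : Type*} [AddCommMonoid V]

/-- The subsequence `∏ i ∈ T, g i` of the sequence `g` has no nonempty zero-sum subsequence. -/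
def ZeroSumFreeOn (g : ι → V) (T : Finset ι) : Prop :=
  ∀ I ⊆ T, I.Nonempty → ∑ i ∈ I, g i ≠ 0

lemma ZeroSumFreeOn.smul {K V : Type*} [DivisionRing K] [AddCommGroup V] [Module K V]
    {g : ι → V} {T : Finset ι} (h : ZeroSumFreeOn g T) {c : K} (hc : c ≠ 0) :
    ZeroSumFreeOn (fun i => c • g i) T := by
  intro I hI hne
  rw [← smul_sum]
  exact smul_ne_zero hc (h I hI hne)

variable [Fintype ι]

/-- A minimal zero-sum sequence, encoded as a family `g` over a finite index type: the terms of
`g` sum to zero and no proper nonempty subfamily does. -/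
structure IsMinimalZeroSum (g : ι → V) : Prop where
  sum_eq_zero : ∑ i, g i = 0
  sum_ne_zero : ∀ I : Finset ι, I.Nonempty → I ≠ univ → ∑ i ∈ I, g i ≠ 0

lemma IsMinimalZeroSum.zeroSumFreeOn {g : ι → V} (hg : IsMinimalZeroSum g) {T : Finset ι}
    (hT : T ≠ univ) : ZeroSumFreeOn g T :=
  fun I hI hne => hg.sum_ne_zero I hne fun h => hT (univ_subset_iff.mp (h ▸ hI))

lemma IsMinimalZeroSum.ne_zero {g : ι → V} (hg : IsMinimalZeroSum g) (hcard : 1 < Fintype.card ι)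
    (i : ι) : g i ≠ 0 := by
  have hne : ({i} : Finset ι) ≠ univ := fun h => by
    have := congrArg card h
    rw [card_singleton, card_univ] at this
    omega
  simpa using hg.sum_ne_zero {i} (singleton_nonempty i) hne

end Sequences

section AugmentationIdeal

variable (R : Type*) {V ι : Type*} [CommRing R]

/-- The generator `e_g - 1` of the augmentation ideal of the group algebra `R[V]`. -/
noncomputable def augGen [AddZeroClass V] (g : V) : R[V] := .single g 1 - 1

/-- The augmentation ideal of the group algebra `R[V]`, given by its generators `e_g - 1`. -/
noncomputable def augIdeal (V : Type*) [AddCommMonoid V] : Ideal R[V] :=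
  Ideal.span (Set.range (augGen R))

section Monoid

variable [AddCommMonoid V]

lemma single_eq_augGen_add_one (g : V) : (.single g 1 : R[V]) = augGen R g + 1 :=
  (sub_add_cancel _ _).symm

lemma augGen_zero : augGen R (0 : V) = 0 := by
  rw [augGen, ← AddMonoidAlgebra.one_def, sub_self]

lemma augGen_add (g h : V) :
    augGen R (g + h) = augGen R g + augGen R h + augGen R g * augGen R h := by
  have hmul : (.single (g + h) 1 : R[V]) = .single g 1 * .single h 1 := by
    rw [AddMonoidAlgebra.single_mul_single, one_mul]
  simp only [single_eq_augGen_add_one] at hmul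
  linear_combination hmul

lemma augGen_four_nsmul (g : V) :
    augGen R (4 • g) = augGen R (2 • g) * (2 * .single g 1 + augGen R g ^ 2) := by
  rw [show 4 • g = 2 • g + 2 • g by abel, two_nsmul, augGen_add R (g + g), augGen_add,
    single_eq_augGen_add_one]
  ring

lemma augGen_mem_augIdeal (g : V) : augGen R g ∈ augIdeal R V :=
  Ideal.subset_span ⟨g, rfl⟩

lemma prod_augGen_mem_augIdeal_pow (g : ι → V) (T : Finset ι) :
    ∏ i ∈ T, augGen R (g i) ∈ augIdeal R V ^ T.card := by
  rw [← prod_const]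
  exact Ideal.prod_mem_prod fun i _ => augGen_mem_augIdeal R (g i)

lemma augGen_dvd_augGen_nsmul (n : ℕ) (g : V) : augGen R g ∣ augGen R (n • g) := by
  simpa only [augGen, AddMonoidAlgebra.single_pow, one_pow] using
    sub_dvd_pow_sub_pow (.single g 1 : R[V]) 1 n

lemma coeff_prod_augGen_zero {g : ι → V} {T : Finset ι} (hT : ZeroSumFreeOn g T) :
    (∏ i ∈ T, augGen R (g i)).coeff 0 = (-1) ^ T.card := by
  classical
  have hexpand : ∏ i ∈ T, augGen R (g i) =
      ∑ I ∈ T.powerset, .single (∑ i ∈ I, g i) ((-1) ^ (T \ I).card) := by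
    simp only [augGen, sub_eq_add_neg, prod_add, AddMonoidAlgebra.prod_single, prod_const_one,
      prod_const]
    refine sum_congr rfl fun I _ => ?_
    rw [AddMonoidAlgebra.one_def, ← AddMonoidAlgebra.single_neg, AddMonoidAlgebra.single_pow,
      AddMonoidAlgebra.single_mul_single, smul_zero, add_zero, one_mul]
  rw [hexpand, AddMonoidAlgebra.coeff_sum, Finsupp.finsetSum_apply,
    sum_eq_single_of_mem ∅ (empty_mem_powerset T)]
  · simp
  · intro I hI hne
    exact Finsupp.single_eq_of_ne
      (hT I (mem_powerset.mp hI) (nonempty_iff_ne_empty.mpr hne)).symm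

lemma augGen_sq_mem_augIdeal_sq (h : V) : augGen R h ^ 2 ∈ augIdeal R V ^ 2 :=
  Ideal.pow_mem_pow (augGen_mem_augIdeal _ h) 2

lemma two_mul_prod_sub_mem_augIdeal_pow (h : ι → V) (T : Finset ι) :
    2 * ∏ i ∈ T, (2 * .single (h i) 1 + augGen R (h i) ^ 2) -
      2 ^ T.card * (2 * .single (∑ i ∈ T, h i) 1 + ∑ i ∈ T, augGen R (h i) ^ 2) ∈
      augIdeal R V ^ 3 := by
  classical
  induction T using Finset.induction_on with
  | empty => simp [← AddMonoidAlgebra.one_def]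
  | insert a T ha ih =>
    set v := augGen R (h a)
    set N := ∑ i ∈ T, augGen R (h i) ^ 2
    set s := ∑ i ∈ T, h i
    have hv : v ∈ augIdeal R V := augGen_mem_augIdeal _ _
    have hN : N ∈ augIdeal R V ^ 2 := sum_mem fun i _ => augGen_sq_mem_augIdeal_sq R (h i)
    have hvN : v * N ∈ augIdeal R V ^ 3 :=
      pow_succ' (augIdeal R V) 2 ▸ Ideal.mul_mem_mul hv hN
    have hvs : v ^ 2 * augGen R s ∈ augIdeal R V ^ 3 :=
      pow_succ (augIdeal R V) 2 ▸
        Ideal.mul_mem_mul (augGen_sq_mem_augIdeal_sq R _) (augGen_mem_augIdeal _ s)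
    have hsingle : (.single (h a + s) 1 : R[V]) = (v + 1) * (augGen R s + 1) := by
      rw [single_eq_augGen_add_one, augGen_add]
      ring
    rw [single_eq_augGen_add_one] at ih
    rw [prod_insert ha, sum_insert ha, sum_insert ha, card_insert_of_notMem ha, hsingle,
      single_eq_augGen_add_one]
    convert add_mem (Ideal.mul_mem_left _ (2 * (v + 1) + v ^ 2) ih)
      (Ideal.mul_mem_left _ (2 ^ T.card)
        (add_mem (Ideal.mul_mem_left _ (2 + v) hvN) (Ideal.mul_mem_left _ 2 hvs))) using 1
    ring

end Monoid

lemma single_neg_two_nsmul_sub_mem_augIdeal_pow [AddCommGroup V] (s : V) :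
    .single (-(2 • s)) 1 - (1 - 2 * augGen R s + 3 * augGen R s ^ 2) ∈
      augIdeal R V ^ 3 := by
  set y := augGen R s
  have hinv : (.single (-(2 • s)) 1 : R[V]) * (y + 1) ^ 2 = 1 := by
    rw [← single_eq_augGen_add_one, AddMonoidAlgebra.single_pow,
      AddMonoidAlgebra.single_mul_single, neg_add_cancel, one_pow, one_mul,
      AddMonoidAlgebra.one_def]
  have hy : y ^ 3 ∈ augIdeal R V ^ 3 := Ideal.pow_mem_pow (augGen_mem_augIdeal _ s) 3
  convert Ideal.mul_mem_left _ (-(.single (-(2 • s)) 1) * (4 + 3 * y)) hy using 1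
  linear_combination (1 - 2 * y + 3 * y ^ 2) * hinv

lemma augGen_neg [AddCommGroup V] (g : V) :
    augGen R (-g) = -1 * augGen R g * .single (-g) 1 := by
  have hinv : (.single g 1 : R[V]) * .single (-g) 1 = 1 := by
    rw [AddMonoidAlgebra.single_mul_single, add_neg_cancel, one_mul, AddMonoidAlgebra.one_def]
  rw [augGen, augGen]
  linear_combination hinv

lemma prod_augGen_neg [AddCommGroup V] (g : ι → V) (T : Finset ι) :
    ∏ i ∈ T, augGen R (-g i) =
      (-1) ^ T.card * (∏ i ∈ T, augGen R (g i)) * .single (-∑ i ∈ T, g i) 1 := by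
  simp only [augGen_neg, prod_mul_distrib, prod_const, AddMonoidAlgebra.prod_single,
    sum_neg_distrib, one_pow]

section CharP

variable {p : ℕ} [Fact p.Prime] [AddCommGroup V] [Module (ZMod p) V]

lemma augGen_pow_char [CharP R p] (g : V) : augGen R g ^ p = 0 := by
  have : CharP R[V] p :=
    charP_of_injective_algebraMap (FaithfulSMul.algebraMap_injective R R[V]) p
  rw [augGen, sub_pow_char, AddMonoidAlgebra.single_pow, ← Nat.cast_smul_eq_nsmul (ZMod p),
    CharP.cast_eq_zero, zero_smul, one_pow, one_pow, AddMonoidAlgebra.one_def, sub_self]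

variable {κ : Type*} (b : Module.Basis κ (ZMod p) V)

lemma augIdeal_eq_span_range_basis :
    augIdeal R V = Ideal.span (Set.range fun k => augGen R (b k)) := by
  refine le_antisymm (Ideal.span_le.mpr ?_) (Ideal.span_mono ?_)
  · rintro _ ⟨g, rfl⟩
    refine b.mem_span g |> Submodule.span_induction (p := fun g _ => augGen R g ∈ _)
      ?_ ?_ ?_ ?_
    · rintro _ ⟨k, rfl⟩
      exact Ideal.subset_span ⟨k, rfl⟩
    · rw [augGen_zero]
      exact Ideal.zero_mem _
    · intro g h _ _ hg hh
      rw [augGen_add]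
      exact add_mem (add_mem hg hh) (Ideal.mul_mem_left _ _ hh)
    · intro c g _ hg
      rw [← ZMod.natCast_zmod_val c, Nat.cast_smul_eq_nsmul]
      exact Ideal.mem_of_dvd _ (augGen_dvd_augGen_nsmul R _ g) hg
  · rintro _ ⟨k, rfl⟩
    exact ⟨b k, rfl⟩

include b in
lemma augIdeal_pow_eq_bot [CharP R p] [Fintype κ] :
    augIdeal R V ^ (Fintype.card κ * (p - 1) + 1) = ⊥ := by
  classical
  rw [augIdeal_eq_span_range_basis R b, Ideal.span, Submodule.span_pow, Submodule.span_eq_bot]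
  intro x hx
  obtain ⟨f, hf, rfl⟩ := Set.mem_pow_iff_prod.mp hx
  choose k hk using hf
  obtain ⟨c, hc⟩ := Fintype.exists_lt_card_fiber_of_mul_lt_card (n := p - 1) k
    (by rw [Fintype.card_fin]; exact Nat.lt_succ_self _)
  have hfiber : ∏ i with k i = c, augGen R (b (k i)) = 0 := by
    rw [prod_congr rfl fun i hi => by rw [(mem_filter.mp hi).2], prod_const]
    exact pow_eq_zero_of_le (by omega) (augGen_pow_char R (b c))
  simp only [← hk]
  exact zero_dvd_iff.mp (hfiber ▸ prod_dvd_prod_of_subset _ _ _ (filter_subset _ _))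

lemma mul_eq_zero_of_mem_augIdeal_pow {R : Type*} [CommRing R] [CharP R p]
    [Module.Finite (ZMod p) V] {m n : ℕ} {w x : R[V]} (hw : w ∈ augIdeal R V ^ m)
    (hx : x ∈ augIdeal R V ^ n) (hmn : Module.finrank (ZMod p) V * (p - 1) < m + n) :
    w * x = 0 := by
  have hbot := augIdeal_pow_eq_bot R (Module.finBasis (ZMod p) V)
  have hwx : w * x ∈ augIdeal R V ^ (m + n) :=
    pow_add (augIdeal R V) m n ▸ Ideal.mul_mem_mul hw hx
  rw [Fintype.card_fin] at hbot
  exact (Submodule.mem_bot _).mp (hbot ▸ Ideal.pow_le_pow_right hmn hwx)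

end CharP

end AugmentationIdeal

section Pairings

variable {p : ℕ} [Fact p.Prime] {V ι : Type*} [AddCommGroup V] [Module (ZMod p) V]

lemma exists_linearMap_coeff_mul_augGen {w : (ZMod p)[V]}
    (hw : ∀ x ∈ augIdeal (ZMod p) V ^ 2, w * x = 0) :
    ∃ φ : V →ₗ[ZMod p] ZMod p, ∀ h, φ h = (w * augGen (ZMod p) h).coeff 0 := by
  refine ⟨AddMonoidHom.toZModLinearMap p
    (AddMonoidHom.mk' (fun h => (w * augGen (ZMod p) h).coeff 0) fun g h => ?_), fun h => rfl⟩
  have hgh : w * (augGen (ZMod p) g * augGen (ZMod p) h) = 0 :=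
    hw _ (sq (augIdeal (ZMod p) V) ▸ Ideal.mul_mem_mul (augGen_mem_augIdeal _ g)
      (augGen_mem_augIdeal _ h))
  rw [augGen_add, mul_add, mul_add, hgh, add_zero, AddMonoidAlgebra.coeff_add, Finsupp.add_apply]

lemma exists_isSymm_coeff_mul_augGen {w : (ZMod p)[V]}
    (hw : ∀ x ∈ augIdeal (ZMod p) V ^ 3, w * x = 0) :
    ∃ Q : LinearMap.BilinForm (ZMod p) V, Q.IsSymm ∧
      ∀ a b, Q a b = (w * augGen (ZMod p) a * augGen (ZMod p) b).coeff 0 := by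
  have hwa (a : V) : ∀ x ∈ augIdeal (ZMod p) V ^ 2, w * augGen (ZMod p) a * x = 0 := by
    intro x hx
    rw [mul_assoc]
    exact hw _ (pow_succ' (augIdeal (ZMod p) V) 2 ▸
      Ideal.mul_mem_mul (augGen_mem_augIdeal _ a) hx)
  choose φ hφ using fun a => exists_linearMap_coeff_mul_augGen (hwa a)
  have hφ_symm (a b : V) : φ a b = φ b a := by rw [hφ, hφ, mul_right_comm]
  refine ⟨AddMonoidHom.toZModLinearMap p (AddMonoidHom.mk' φ fun a b => ?_), ⟨hφ_symm⟩, hφ⟩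
  ext c
  rw [LinearMap.add_apply, hφ_symm, map_add, hφ_symm c a, hφ_symm c b]

lemma coeff_prod_augGen_smul {g : ι → V} {T : Finset ι} (hT : ZeroSumFreeOn g T)
    (hcard : Even T.card) {c : ZMod p} (hc : c ≠ 0) :
    (∏ i ∈ T, augGen (ZMod p) (c • g i)).coeff 0 = 1 := by
  rw [coeff_prod_augGen_zero _ (hT.smul hc), hcard.neg_one_pow]

section

variable {w : (ZMod p)[V]} {Q : LinearMap.BilinForm (ZMod p) V}

lemma two_mul_coeff_mul_prod (hw : ∀ x ∈ augIdeal (ZMod p) V ^ 3, w * x = 0)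
    (hQ : ∀ a b, Q a b = (w * augGen (ZMod p) a * augGen (ZMod p) b).coeff 0)
    (h : ι → V) (T : Finset ι) :
    2 * (w * ∏ i ∈ T, (2 * .single (h i) 1 + augGen (ZMod p) (h i) ^ 2)).coeff 0 =
      2 ^ T.card * (2 * (w * .single (∑ i ∈ T, h i) 1).coeff 0 + ∑ i ∈ T, Q (h i) (h i)) := by
  have hexpand := hw _ (two_mul_prod_sub_mem_augIdeal_pow (ZMod p) h T)
  set P := ∏ i ∈ T, (2 * .single (h i) 1 + augGen (ZMod p) (h i) ^ 2)
  set E : (ZMod p)[V] := .single (∑ i ∈ T, h i) 1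
  have hmul : 2 • (w * P) = 2 ^ T.card • (2 • (w * E) +
      ∑ i ∈ T, w * augGen (ZMod p) (h i) * augGen (ZMod p) (h i)) := by
    simp only [mul_assoc w, ← sq, ← mul_sum, nsmul_eq_mul, Nat.cast_pow, Nat.cast_ofNat]
    linear_combination hexpand
  have hcoeff := congrArg (fun x => x.coeff 0) hmul
  simp only [AddMonoidAlgebra.coeff_smul, AddMonoidAlgebra.coeff_add, AddMonoidAlgebra.coeff_sum,
    Finsupp.smul_apply, Finsupp.add_apply, Finsupp.finsetSum_apply, ← hQ] at hcoeff
  simpa only [nsmul_eq_mul, Nat.cast_pow, Nat.cast_ofNat] using hcoeff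

lemma coeff_mul_single_neg_two_nsmul (hw : ∀ x ∈ augIdeal (ZMod p) V ^ 3, w * x = 0)
    (hQ : ∀ a b, Q a b = (w * augGen (ZMod p) a * augGen (ZMod p) b).coeff 0) (s : V) :
    (w * .single (-(2 • s)) 1).coeff 0 =
      3 * w.coeff 0 - 2 * (w * .single s 1).coeff 0 + 3 * Q s s := by
  have hexpand := hw _ (single_neg_two_nsmul_sub_mem_augIdeal_pow (ZMod p) s)
  have hmul : w * .single (-(2 • s)) 1 = 3 • w - 2 • (w * .single s 1) +
      3 • (w * augGen (ZMod p) s * augGen (ZMod p) s) := by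
    simp only [single_eq_augGen_add_one _ s, nsmul_eq_mul, Nat.cast_ofNat]
    linear_combination hexpand
  have hcoeff := congrArg (fun x => x.coeff 0) hmul
  simp only [AddMonoidAlgebra.coeff_smul, AddMonoidAlgebra.coeff_add, AddMonoidAlgebra.coeff_sub,
    Finsupp.smul_apply, Finsupp.add_apply, Finsupp.sub_apply, ← hQ] at hcoeff
  simpa only [nsmul_eq_mul, Nat.cast_ofNat] using hcoeff

/- Comparing the constant coefficients of the products over `2h`, `4h` and `-2h`, which are all
equal to `1`, eliminates the unknown coefficient of `w * e_τ` with `τ = ∑ h`. -/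
lemma three_mul_form_sum_add_sum_form_eq_six (hp : p ≠ 2) {h : ι → V} {T : Finset ι}
    (hT : ZeroSumFreeOn h T) (hcard : T.card = 2 * p - 4)
    (hw_prod : w = ∏ i ∈ T, augGen (ZMod p) (2 • h i))
    (hw : ∀ x ∈ augIdeal (ZMod p) V ^ 3, w * x = 0)
    (hQ : ∀ a b, Q a b = (w * augGen (ZMod p) a * augGen (ZMod p) b).coeff 0) :
    3 * Q (∑ i ∈ T, h i) (∑ i ∈ T, h i) + ∑ i ∈ T, Q (h i) (h i) = 6 := by
  have hp_prime : p.Prime := Fact.out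
  have hp2 := hp_prime.two_le
  have two_ne := zmod_two_ne_zero hp
  have heven : Even T.card := ⟨p - 2, by omega⟩
  have hpow : 4 * (2 : ZMod p) ^ T.card = 1 := by
    have hexp : T.card + 2 = (p - 1) * 2 := by omega
    rw [show (4 : ZMod p) = 2 ^ 2 by norm_num, mul_comm, ← pow_add, hexp, pow_mul,
      ZMod.pow_card_sub_one_eq_one two_ne, one_pow]
  have hw_one : w.coeff 0 = 1 := by
    simpa only [hw_prod, ofNat_smul_eq_nsmul] using coeff_prod_augGen_smul hT heven two_ne
  have hfour : (w * ∏ i ∈ T, (2 * .single (h i) 1 + augGen (ZMod p) (h i) ^ 2)).coeff 0 = 1 := by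
    have four_ne : (4 : ZMod p) ≠ 0 := left_ne_zero_of_mul_eq_one hpow
    simpa only [hw_prod, ← prod_mul_distrib, ← augGen_four_nsmul, ofNat_smul_eq_nsmul] using
      coeff_prod_augGen_smul hT heven four_ne
  have hneg : (w * .single (-(2 • ∑ i ∈ T, h i)) 1).coeff 0 = 1 := by
    have := coeff_prod_augGen_smul hT heven (neg_ne_zero.mpr two_ne)
    simpa only [neg_smul, prod_augGen_neg, heven.neg_one_pow, one_mul, ofNat_smul_eq_nsmul,
      sum_nsmul, ← hw_prod] using this
  have hA := two_mul_coeff_mul_prod hw hQ h T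
  have hB := coeff_mul_single_neg_two_nsmul hw hQ (∑ i ∈ T, h i)
  rw [hfour] at hA
  rw [hneg, hw_one] at hB
  linear_combination (-4) * hA - hB - (2 * (w * .single (∑ i ∈ T, h i) 1).coeff 0 +
    ∑ i ∈ T, Q (h i) (h i)) * hpow

lemma three_mul_form_sum_add_sum_form_eq (hp : p ≠ 2) {g : ι → V} {T : Finset ι}
    (hT : ZeroSumFreeOn g T) (hcard : T.card = 2 * p - 4)
    (hw : ∀ x ∈ augIdeal (ZMod p) V ^ 3, (∏ i ∈ T, augGen (ZMod p) (g i)) * x = 0)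
    (hQ : ∀ a b, Q a b = ((∏ i ∈ T, augGen (ZMod p) (g i)) *
      augGen (ZMod p) a * augGen (ZMod p) b).coeff 0) :
    3 * Q (∑ i ∈ T, g i) (∑ i ∈ T, g i) + ∑ i ∈ T, Q (g i) (g i) = 24 := by
  have two_ne := zmod_two_ne_zero hp
  have hhalf (v : V) : 2 • (2 : ZMod p)⁻¹ • v = v := by
    rw [← ofNat_smul_eq_nsmul (ZMod p), smul_inv_smul₀ two_ne]
  have hform := three_mul_form_sum_add_sum_form_eq_six hp (hT.smul (inv_ne_zero two_ne)) hcard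
    (prod_congr rfl fun l _ => by rw [hhalf]) hw hQ
  simp only [← smul_sum, map_smul, LinearMap.smul_apply, smul_eq_mul, ← mul_sum] at hform
  field_simp at hform
  linear_combination hform

end

end Pairings

lemma prod_compl_mul_eq_prod_compl_erase {ι M : Type*} [Fintype ι] [DecidableEq ι] [CommMonoid M]
    (f : ι → M) {s : Finset ι} {i : ι} (hi : i ∈ s) :
    (∏ l ∈ sᶜ, f l) * f i = ∏ l ∈ (s.erase i)ᶜ, f l := by
  rw [compl_erase, prod_insert (notMem_compl.mpr hi), mul_comm]

lemma bilinForm_sum_sum_of_pairwise_eq_one {R M ι : Type*} [CommRing R] [AddCommGroup M]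
    [Module R M] (Q : LinearMap.BilinForm R M) {g : ι → M} {s : Finset ι}
    (hQ : ∀ i ∈ s, ∀ j ∈ s, i ≠ j → Q (g i) (g j) = 1) :
    Q (∑ i ∈ s, g i) (∑ i ∈ s, g i) =
      ∑ i ∈ s, Q (g i) (g i) + (s.card * (s.card - 1) : ℕ) := by
  classical
  have hrow : ∀ i ∈ s, ∑ j ∈ s, Q (g i) (g j) = Q (g i) (g i) + (s.card - 1 : ℕ) := by
    intro i hi
    rw [← add_sum_erase s _ hi, sum_congr rfl fun j hj => hQ i hi j (mem_of_mem_erase hj)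
      (ne_of_mem_erase hj).symm, sum_const, card_erase_of_mem hi, nsmul_one]
  simp only [map_sum, LinearMap.sum_apply]
  rw [sum_comm, sum_congr rfl hrow, sum_add_distrib, sum_const, nsmul_eq_mul, Nat.cast_mul]

namespace IsMinimalZeroSum

variable {p : ℕ} [Fact p.Prime] {V ι : Type*} [AddCommGroup V] [Fintype ι] [DecidableEq ι]
  {g : ι → V}

lemma coeff_prod_compl_augGen (R : Type*) [CommRing R] (hg : IsMinimalZeroSum g)
    {s : Finset ι} (hs : s.Nonempty) (heven : Even sᶜ.card) :
    (∏ l ∈ sᶜ, augGen R (g l)).coeff 0 = 1 := by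
  rw [coeff_prod_augGen_zero _ (hg.zeroSumFreeOn ((compl_ne_univ_iff_nonempty s).mpr hs)),
    heven.neg_one_pow]

lemma coeff_prod_compl_mul_augGen_mul_augGen (hg : IsMinimalZeroSum g)
    (hcard : Fintype.card ι = 2 * p - 1) {s : Finset ι} (hs : s.card = 3) {i j : ι} (hi : i ∈ s)
    (hj : j ∈ s) (hij : i ≠ j) :
    ((∏ l ∈ sᶜ, augGen (ZMod p) (g l)) * augGen (ZMod p) (g i) * augGen (ZMod p) (g j)).coeff 0 =
      1 := by
  have hj' : j ∈ s.erase i := mem_erase.mpr ⟨hij.symm, hj⟩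
  have herase := card_erase_of_mem hi
  have herase' := card_erase_of_mem hj'
  rw [prod_compl_mul_eq_prod_compl_erase (fun l => augGen (ZMod p) (g l)) hi,
    prod_compl_mul_eq_prod_compl_erase (fun l => augGen (ZMod p) (g l)) hj']
  refine hg.coeff_prod_compl_augGen (ZMod p) (card_pos.mp (by omega)) ⟨p - 1, ?_⟩
  rw [card_compl]
  omega

variable [Module (ZMod p) V]

lemma exists_linearMap_of_card_eq_two [DecidableEq V] (hg : IsMinimalZeroSum g)
    (hV : Module.finrank (ZMod p) V = 2) (hcard : Fintype.card ι = 2 * p - 1) {s : Finset ι}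
    (hs : s.card = 2) :
    ∃ φ : V →ₗ[ZMod p] ZMod p,
      (∀ h, φ h = ((∏ l ∈ sᶜ, augGen (ZMod p) (g l)) * augGen (ZMod p) h).coeff 0) ∧
      (∀ i ∈ s, φ (g i) = 1) ∧ ∀ f, p ≤ #{l ∈ sᶜ | g l = f} + 1 → φ f = 0 := by
  have hp := (Fact.out : p.Prime).two_le
  have := Module.finite_of_finrank_eq_succ hV
  have hcompl : sᶜ.card = 2 * p - 3 := by rw [card_compl]; omega
  obtain ⟨φ, hφ⟩ := exists_linearMap_coeff_mul_augGen fun x hx => mul_eq_zero_of_mem_augIdeal_pow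
    (prod_augGen_mem_augIdeal_pow (ZMod p) g sᶜ) hx (by rw [hV, hcompl]; omega)
  refine ⟨φ, hφ, fun i hi => ?_, fun f hf => ?_⟩
  · rw [hφ, prod_compl_mul_eq_prod_compl_erase (fun l => augGen (ZMod p) (g l)) hi]
    have herase := card_erase_of_mem hi
    refine hg.coeff_prod_compl_augGen (ZMod p) (card_pos.mp (by omega)) ⟨p - 1, ?_⟩
    rw [card_compl]
    omega
  · have hpow : (∏ l ∈ sᶜ with g l = f, augGen (ZMod p) (g l)) * augGen (ZMod p) f = 0 := by
      rw [prod_congr rfl fun l hl => by rw [(mem_filter.mp hl).2], prod_const, ← pow_succ]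
      exact pow_eq_zero_of_le hf (augGen_pow_char (ZMod p) f)
    have hprod : (∏ l ∈ sᶜ, augGen (ZMod p) (g l)) * augGen (ZMod p) f = 0 :=
      zero_dvd_iff.mp (hpow ▸ mul_dvd_mul_right
        (prod_dvd_prod_of_subset _ _ _ (filter_subset _ sᶜ)) _)
    rw [hφ, hprod, AddMonoidAlgebra.coeff_zero, Finsupp.zero_apply]

lemma exists_form_of_card_eq_three (hg : IsMinimalZeroSum g) (hp : p ≠ 2)
    (hV : Module.finrank (ZMod p) V = 2) (hcard : Fintype.card ι = 2 * p - 1) {s : Finset ι}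
    (hs : s.card = 3) :
    ∃ Q : LinearMap.BilinForm (ZMod p) V, Q.IsSymm ∧
      (∀ a b, Q a b = ((∏ l ∈ sᶜ, augGen (ZMod p) (g l)) *
        augGen (ZMod p) a * augGen (ZMod p) b).coeff 0) ∧
      (∀ i ∈ s, ∀ j ∈ s, i ≠ j → Q (g i) (g j) = 1) ∧
      ∑ l, Q (g l) (g l) + 2 * ∑ l ∈ s, Q (g l) (g l) = 6 := by
  have hp2 := (Fact.out : p.Prime).two_le
  have := Module.finite_of_finrank_eq_succ hV
  have hcompl : sᶜ.card = 2 * p - 4 := by rw [card_compl]; omega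
  have hkill : ∀ x ∈ augIdeal (ZMod p) V ^ 3, (∏ l ∈ sᶜ, augGen (ZMod p) (g l)) * x = 0 :=
    fun x hx => mul_eq_zero_of_mem_augIdeal_pow (prod_augGen_mem_augIdeal_pow (ZMod p) g sᶜ) hx
      (by rw [hV, hcompl]; omega)
  obtain ⟨Q, hQ_symm, hQ⟩ := exists_isSymm_coeff_mul_augGen hkill
  have hQ_one : ∀ i ∈ s, ∀ j ∈ s, i ≠ j → Q (g i) (g j) = 1 := fun i hi j hj hij =>
    (hQ _ _).trans (hg.coeff_prod_compl_mul_augGen_mul_augGen hcard hs hi hj hij)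
  refine ⟨Q, hQ_symm, hQ, hQ_one, ?_⟩
  have hfree : ZeroSumFreeOn g sᶜ :=
    hg.zeroSumFreeOn ((compl_ne_univ_iff_nonempty s).mpr (card_pos.mp (by omega)))
  have hform := three_mul_form_sum_add_sum_form_eq hp hfree hcompl hkill hQ
  have hsum : ∑ l ∈ sᶜ, g l = -∑ l ∈ s, g l :=
    eq_neg_of_add_eq_zero_right ((sum_add_sum_compl s g).trans hg.sum_eq_zero)
  have hdiag := bilinForm_sum_sum_of_pairwise_eq_one Q hQ_one
  rw [hs] at hdiag
  rw [hsum, map_neg, map_neg, LinearMap.neg_apply, neg_neg, hdiag] at hform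
  have hsplit := sum_add_sum_compl s fun l => Q (g l) (g l)
  push_cast at hform
  linear_combination hform - hsplit

end IsMinimalZeroSum

section Plane

variable {K V : Type*} [Field K] [AddCommGroup V] [Module K V]

lemma sq_mul_form_self_of_smul_eq {Q : LinearMap.BilinForm K V} (hQ : Q.IsSymm) {u v w : V}
    {α β m : K} (hw : β • w = α • u + m • v) :
    β ^ 2 * Q w w = α ^ 2 * Q u u + 2 * α * m * Q u v + m ^ 2 * Q v v := by
  have hform := congrArg (fun z => Q z z) hw
  simp only [map_add, map_smul, LinearMap.add_apply, LinearMap.smul_apply, smul_eq_mul,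
    hQ.eq v u] at hform
  linear_combination hform

lemma exists_eq_smul_of_apply_eq_zero (hV : Module.finrank K V = 2) {φ : Module.Dual K V}
    (hφ : φ ≠ 0) {a v : V} (ha : a ≠ 0) (hφa : φ a = 0) (hφv : φ v = 0) : ∃ c : K, v = c • a := by
  have := Module.finite_of_finrank_eq_succ hV
  have hker : Module.finrank K (LinearMap.ker φ) = 1 := by
    have := Module.Dual.finrank_ker_add_one_of_ne_zero hφ
    omega
  obtain ⟨c, hc⟩ := (finrank_eq_one_iff_of_nonzero' (⟨a, hφa⟩ : LinearMap.ker φ)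
    (fun h0 => ha (congrArg Subtype.val h0))).mp hker ⟨v, hφv⟩
  exact ⟨c, (congrArg Subtype.val hc).symm⟩

/-- Linear coordinates on a plane, adapted to a vector `a` on the line `t = 0`: the value of `x` at
a point of that line is its coordinate with respect to `a`. -/
structure IsCoordPair (x t : Module.Dual K V) (a : V) : Prop where
  left_apply : x a = 1
  right_apply : t a = 0
  eq_smul : ∀ v, t v = 0 → v = x v • a

lemma exists_isCoordPair (hV : Module.finrank K V = 2) {x : Module.Dual K V} {a : V}
    (hx : x a = 1) : ∃ t : Module.Dual K V, IsCoordPair x t a := by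
  have ha : a ≠ 0 := by
    rintro rfl
    simp at hx
  have hspan : K ∙ a < ⊤ := by
    refine lt_top_iff_ne_top.mpr fun htop => ?_
    have := finrank_span_singleton (K := K) ha
    rw [htop, finrank_top] at this
    omega
  obtain ⟨t, ht, hat⟩ := Submodule.exists_le_ker_of_lt_top _ hspan
  have hta : t a = 0 := hat (Submodule.mem_span_singleton_self a)
  refine ⟨t, hx, hta, fun v hv => ?_⟩
  obtain ⟨c, rfl⟩ := exists_eq_smul_of_apply_eq_zero hV ht ha hta hv
  rw [map_smul, hx, smul_eq_mul, mul_one]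

variable {ι : Type*} [Fintype ι]

/-- The properties of the symmetric bilinear form which the group algebra attaches to three terms
`g i`, `g j`, `g k` of a minimal zero-sum sequence `g` of length `2p - 1` over a plane. -/
structure IsTripleForm (g : ι → V) (i j k : ι) (Q : LinearMap.BilinForm K V) : Prop where
  isSymm : Q.IsSymm
  apply_eq_one₁₂ : Q (g i) (g j) = 1
  apply_eq_one₁₃ : Q (g i) (g k) = 1
  apply_eq_one₂₃ : Q (g j) (g k) = 1
  sum_add_eq_six : ∑ l, Q (g l) (g l) + 2 * (Q (g i) (g i) + Q (g j) (g j) + Q (g k) (g k)) = 6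

/-- The quadratic polynomial whose vanishing is the relation forced on two terms of a minimal
zero-sum sequence of maximal length that lie on different lines parallel to `t = 0`; the arguments
are the pairs `(1 - x, t)` of the two terms. -/
def pairDefect (s t s' t' : K) : K := (s * t' - s' * t) ^ 2 - s * t' ^ 2 - s' * t ^ 2

lemma IsTripleForm.sum_form_self {g : ι → V} {i j k : ι} {Q : LinearMap.BilinForm K V}
    {x : Module.Dual K V} (hQ : IsTripleForm g i j k Q) (hij : g j = g i) (hx : Q (g k) = x) :
    ∑ l, Q (g l) (g l) = 2 - 2 * x (g k) := by
  have hii := hQ.apply_eq_one₁₂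
  have hsum := hQ.sum_add_eq_six
  rw [hij] at hii hsum
  rw [hii, hx] at hsum
  linear_combination hsum

namespace IsCoordPair

variable {x t : Module.Dual K V} {a : V}

lemma smul_eq (h : IsCoordPair x t a) (v w : V) :
    t v • w = t w • v + (t v * x w - t w * x v) • a := by
  have hline := h.eq_smul (t v • w - t w • v) (by simp [mul_comm])
  rw [eq_add_of_sub_eq' hline]
  simp

lemma sq_mul_form_self (h : IsCoordPair x t a) {Q : LinearMap.BilinForm K V} (hQ : Q.IsSymm)
    (haa : Q a a = 1) {v : V} (hv : Q v = x) (w : V) :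
    t v ^ 2 * Q w w =
      t w ^ 2 * x v + 2 * t w * (t v * x w - t w * x v) + (t v * x w - t w * x v) ^ 2 := by
  rw [sq_mul_form_self_of_smul_eq hQ (h.smul_eq v w), hv, haa, h.left_apply]
  ring

lemma form_self_eq_zero (h : IsCoordPair x t a) {B : LinearMap.BilinForm K V} (hB : B.IsSymm)
    {u v : V} (hau : B a u = 0) (hav : B a v = 0) (huv : B u v = 0) (hu : t u ≠ 0) (hv : t v ≠ 0)
    (hne : t v * x u - t u * x v ≠ 0) (w : V) : B w w = 0 := by
  have huv_smul := h.smul_eq v u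
  have haa : B a a = 0 := by
    have := congrArg (B a) huv_smul
    simpa [hau, hav, hne] using this
  have hvv : B v v = 0 := by
    have := congrArg (B v) huv_smul
    simpa [hB.eq v u, huv, hB.eq v a, hav, hu] using this
  have hww := sq_mul_form_self_of_smul_eq hB (h.smul_eq v w)
  simpa [hvv, haa, hB.eq v a, hav, hv] using hww

variable {g : ι → V} {i₀ j₀ i j : ι} {Q Qi Qj : LinearMap.BilinForm K V}

lemma sum_pairDefect (h : IsCoordPair x t (g i₀)) (hj₀ : g j₀ = g i₀) (hg : ∑ l, g l = 0)
    (hQi : IsTripleForm g i₀ j₀ i Qi) (hxi : Qi (g i) = x) :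
    ∑ l, pairDefect (1 - x (g i)) (t (g i)) (1 - x (g l)) (t (g l)) =
      2 * (1 - x (g i)) * t (g i) ^ 2 := by
  have hx : ∑ l, x (g l) = 0 := by rw [← map_sum, hg, map_zero]
  have ht : ∑ l, t (g l) = 0 := by rw [← map_sum, hg, map_zero]
  have haa : Qi (g i₀) (g i₀) = 1 := by simpa only [hj₀] using hQi.apply_eq_one₁₂
  have hterm (l : ι) : pairDefect (1 - x (g i)) (t (g i)) (1 - x (g l)) (t (g l)) =
      t (g i) ^ 2 * Qi (g l) (g l) - t (g i) ^ 2 * x (g l) -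
        2 * t (g i) * (1 - x (g i)) * t (g l) := by
    rw [h.sq_mul_form_self hQi.isSymm haa hxi (g l), pairDefect]
    ring
  simp only [hterm, sum_sub_distrib, ← mul_sum, hx, ht, hQi.sum_form_self hj₀ hxi]
  ring

lemma mul_form_self_eq (h : IsCoordPair x t (g i₀)) (hj₀ : g j₀ = g i₀)
    (hQ : IsTripleForm g i₀ i j Q)
    (hQi : IsTripleForm g i₀ j₀ i Qi) (hxi : Qi (g i) = x)
    (hQj : IsTripleForm g i₀ j₀ j Qj) (hxj : Qj (g j) = x)
    (hi : t (g i) ≠ 0) (hj : t (g j) ≠ 0)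
    (hne : t (g j) * x (g i) - t (g i) * x (g j) ≠ 0) (w : V) :
    (t (g j) * x (g i) - t (g i) * x (g j)) * Q w w =
      t (g j) * Qj w w - t (g i) * Qi w w := by
  have hij_smul := h.smul_eq (g j) (g i)
  have haai : Qi (g i₀) (g i₀) = 1 := by simpa only [hj₀] using hQi.apply_eq_one₁₂
  have haaj : Qj (g i₀) (g i₀) = 1 := by simpa only [hj₀] using hQj.apply_eq_one₁₂
  have hai := congrArg (Qi (g i₀)) hij_smul
  have haj := congrArg (Qj (g i₀)) hij_smul
  simp only [map_add, map_smul, smul_eq_mul, hQi.apply_eq_one₁₃, hQj.apply_eq_one₁₃, haai, haaj]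
    at hai haj
  have hB := h.form_self_eq_zero (u := g i) (v := g j)
    (B := (t (g j) * x (g i) - t (g i) * x (g j)) • Q - t (g j) • Qj + t (g i) • Qi)
    ⟨fun y z => by simp [hQ.isSymm.eq y z, hQi.isSymm.eq y z, hQj.isSymm.eq y z]⟩
    ?_ ?_ ?_ hi hj hne w
  all_goals simp only [LinearMap.add_apply, LinearMap.sub_apply, LinearMap.smul_apply,
    smul_eq_mul] at *
  · linear_combination hB
  · rw [hQ.apply_eq_one₁₂, hQi.apply_eq_one₁₃]
    linear_combination -haj
  · rw [hQ.apply_eq_one₁₃, hQj.apply_eq_one₁₃]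
    linear_combination -hai
  · rw [hQ.apply_eq_one₂₃, hxi, hQj.isSymm.eq, hxj]
    ring

lemma pairDefect_eq_zero (h : IsCoordPair x t (g i₀)) (two_ne : (2 : K) ≠ 0) (hj₀ : g j₀ = g i₀)
    (hQ : IsTripleForm g i₀ i j Q)
    (hQi : IsTripleForm g i₀ j₀ i Qi) (hxi : Qi (g i) = x)
    (hQj : IsTripleForm g i₀ j₀ j Qj) (hxj : Qj (g j) = x)
    (hi : t (g i) ≠ 0) (hj : t (g j) ≠ 0) (hne_t : t (g i) ≠ t (g j))
    (hne : t (g j) * x (g i) - t (g i) * x (g j) ≠ 0) :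
    pairDefect (1 - x (g i)) (t (g i)) (1 - x (g j)) (t (g j)) = 0 := by
  have haai : Qi (g i₀) (g i₀) = 1 := by simpa only [hj₀] using hQi.apply_eq_one₁₂
  have haaj : Qj (g i₀) (g i₀) = 1 := by simpa only [hj₀] using hQj.apply_eq_one₁₂
  have hmul := h.mul_form_self_eq hj₀ hQ hQi hxi hQj hxj hi hj hne
  have hmul_sum := sum_congr rfl fun l (_ : l ∈ univ) => hmul (g l)
  rw [sum_sub_distrib, ← mul_sum, ← mul_sum, ← mul_sum, hQi.sum_form_self hj₀ hxi,
    hQj.sum_form_self hj₀ hxj] at hmul_sum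
  have hmul_a := hmul (g i₀)
  have hmul_i := hmul (g i)
  have hmul_j := hmul (g j)
  rw [haai, haaj] at hmul_a
  rw [hxi] at hmul_i
  rw [hxj] at hmul_j
  have hQi_j := h.sq_mul_form_self hQi.isSymm haai hxi (g j)
  have hQj_i := h.sq_mul_form_self hQj.isSymm haaj hxj (g i)
  have hprod : 2 * (t (g i) - t (g j)) *
      pairDefect (1 - x (g i)) (t (g i)) (1 - x (g j)) (t (g j)) = 0 := by
    rw [pairDefect]
    linear_combination t (g i) * t (g j) *
        ((t (g j) * x (g i) - t (g i) * x (g j)) * hQ.sum_add_eq_six - hmul_sum -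
          2 * hmul_a - 2 * hmul_i - 2 * hmul_j) - 2 * t (g i) * hQj_i + 2 * t (g j) * hQi_j
  exact (mul_eq_zero.mp hprod).resolve_left (mul_ne_zero two_ne (sub_ne_zero.mpr hne_t))

end IsCoordPair

end Plane

namespace IsMinimalZeroSum

variable {p : ℕ} [Fact p.Prime] {V ι : Type*} [AddCommGroup V] [Module (ZMod p) V] [Fintype ι]
  {g : ι → V}

lemma exists_linearMap_and_forall_isTripleForm (hg : IsMinimalZeroSum g) (hp : p ≠ 2)
    (hV : Module.finrank (ZMod p) V = 2) (hcard : Fintype.card ι = 2 * p - 1) {i j : ι}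
    (hij : i ≠ j) :
    ∃ x : Module.Dual (ZMod p) V, x (g i) = 1 ∧ x (g j) = 1 ∧
      ∀ k, k ≠ i → k ≠ j → ∃ Q, IsTripleForm g i j k Q ∧ Q (g k) = x := by
  classical
  obtain ⟨x, hx, hx_one, -⟩ := hg.exists_linearMap_of_card_eq_two hV hcard (card_pair hij)
  refine ⟨x, hx_one i (by simp), hx_one j (by simp), fun k hki hkj => ?_⟩
  have hk : k ∉ ({i, j} : Finset ι) := by simp [hki, hkj]
  have hs : (insert k {i, j} : Finset ι).card = 3 := by rw [card_insert_of_notMem hk, card_pair hij]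
  obtain ⟨Q, hQ_symm, hQ, hQ_one, hQ_sum⟩ := hg.exists_form_of_card_eq_three hp hV hcard hs
  rw [sum_insert hk, sum_pair hij] at hQ_sum
  refine ⟨Q, ⟨hQ_symm, hQ_one i (by simp) j (by simp) hij, hQ_one i (by simp) k (by simp) hki.symm,
    hQ_one j (by simp) k (by simp) hkj.symm, by linear_combination hQ_sum⟩, ?_⟩
  ext h
  rw [hQ, hx, prod_compl_mul_eq_prod_compl_erase (fun l => augGen (ZMod p) (g l))
    (mem_insert_self k _), erase_insert hk]

lemma eq_of_smul_eq_smul (hg : IsMinimalZeroSum g) (hV : Module.finrank (ZMod p) V = 2)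
    (hcard : Fintype.card ι = 2 * p - 1) {i j : ι} (hij : i ≠ j) {c d : ZMod p}
    (h : c • g i = d • g j) : c = d := by
  classical
  obtain ⟨φ, -, hφ, -⟩ := hg.exists_linearMap_of_card_eq_two hV hcard (card_pair hij)
  have hφi := hφ i (by simp)
  have hφj := hφ j (by simp)
  simpa [hφi, hφj] using congrArg φ h

lemma exists_ne_map_eq (hg : IsMinimalZeroSum g) (hp : p ≠ 2)
    (hV : Module.finrank (ZMod p) V = 2) (hcard : Fintype.card ι = 2 * p - 1) :
    ∃ i j, i ≠ j ∧ g i = g j := by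
  have hp2 := (Fact.out : p.Prime).two_le
  have hg_ne := hg.ne_zero (by omega)
  have := Module.finite_of_finrank_eq_succ hV
  have : Finite V := Module.finite_of_finite (ZMod p)
  have hlines : Nat.card (Projectivization (ZMod p) V) < Nat.card ι := by
    rw [Projectivization.card_of_finrank_two (ZMod p) V hV, Nat.card_zmod, Nat.card_eq_fintype_card,
      hcard]
    omega
  obtain ⟨i, j, hline, hij⟩ := Function.not_injective_iff.mp fun hinj =>
    hlines.not_ge (Nat.card_le_card_of_injective
      (fun i => Projectivization.mk (ZMod p) (g i) (hg_ne i)) hinj)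
  obtain ⟨c, hc⟩ := (Projectivization.mk_eq_mk_iff' _ _ _ _ _).mp hline
  obtain rfl := hg.eq_of_smul_eq_smul hV hcard hij ((one_smul _ _).trans hc.symm)
  exact ⟨i, j, hij, (one_smul (ZMod p) (g j) ▸ hc).symm⟩

end IsMinimalZeroSum

lemma sub_one_le_of_natCast_eq_neg_one {p n : ℕ} (h : (n : ZMod p) = -1) : p - 1 ≤ n := by
  have hdvd : p ∣ n + 1 := by
    rw [← ZMod.natCast_eq_zero_iff, Nat.cast_succ, h, neg_add_cancel]
  have := Nat.le_of_dvd n.succ_pos hdvd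
  omega

section PairDefect

variable {K : Type*} [Field K]

lemma two_mul_mul_eq_of_pairDefect_eq_zero {σ₁ σ₂ τ s t : K} (h₁ : pairDefect σ₁ τ s t = 0)
    (h₂ : pairDefect σ₂ τ s t = 0) (hσ : σ₁ ≠ σ₂) (ht : t ≠ 0) :
    2 * s * τ = (σ₁ + σ₂ - 1) * t := by
  refine mul_left_cancel₀ (mul_ne_zero (sub_ne_zero.mpr hσ) ht) ?_
  rw [pairDefect] at h₁ h₂
  linear_combination h₂ - h₁

lemma eq_zero_or_eq_one_of_pairDefect_eq_zero {s t t' : K} (h : pairDefect s t 0 t' = 0)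
    (ht' : t' ≠ 0) : s = 0 ∨ s = 1 := by
  have hprod : t' ^ 2 * (s * (s - 1)) = 0 := by
    rw [pairDefect] at h
    linear_combination h
  exact (mul_eq_zero.mp ((mul_eq_zero.mp hprod).resolve_left (pow_ne_zero 2 ht'))).imp_right
    sub_eq_zero.mp

/-- The relations between the coordinates `(1 - x, t)` of the terms of a minimal zero-sum sequence
of maximal length over a plane, when `t` vanishes on a repeated term. -/
structure IsDefectSystem {ι : Type*} [Fintype ι] (s t : ι → K) : Prop where
  sum_left : ∑ i, s i = -1
  sum_right : ∑ i, t i = 0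
  left_eq_zero : ∀ i, t i = 0 → s i = 0
  pairDefect_eq_zero : ∀ i j, t i ≠ t j → pairDefect (s i) (t i) (s j) (t j) = 0
  sum_pairDefect : ∀ i, ∑ j, pairDefect (s i) (t i) (s j) (t j) = 2 * s i * t i ^ 2

end PairDefect

namespace IsDefectSystem

variable {ι : Type*} [Fintype ι]

lemma card_fiber_eq_neg_one {K : Type*} [Field K] [DecidableEq K] {s t : ι → K}
    (h : IsDefectSystem s t) (two_ne : (2 : K) ≠ 0) {i : ι} (hi : s i ≠ 0)
    (hconst : ∀ j, t j = t i → s j = s i) : (#{j | t j = t i} : K) = -1 := by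
  have hti : t i ≠ 0 := mt (h.left_eq_zero i) hi
  have hfiber : ∑ j with t j = t i, pairDefect (s i) (t i) (s j) (t j) = 2 * s i * t i ^ 2 := by
    rw [← h.sum_pairDefect i]
    refine sum_subset (subset_univ _) fun j _ hj => h.pairDefect_eq_zero i j fun hij => hj ?_
    simpa using hij.symm
  have hterm : ∀ j ∈ ({j | t j = t i} : Finset ι),
      pairDefect (s i) (t i) (s j) (t j) = -(2 * s i * t i ^ 2) := by
    intro j hj
    have hj := (mem_filter.mp hj).2
    rw [pairDefect, hj, hconst j hj]
    ring
  rw [sum_congr rfl hterm, sum_const, nsmul_eq_mul] at hfiber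
  refine mul_right_cancel₀ (mul_ne_zero (mul_ne_zero two_ne hi) (pow_ne_zero 2 hti)) ?_
  linear_combination -hfiber

variable {p : ℕ} [Fact p.Prime] {s t : ι → ZMod p}

lemma sub_one_le_card_fiber (h : IsDefectSystem s t) (hp : p ≠ 2) {i : ι} (hi : s i ≠ 0)
    (hconst : ∀ j, t j = t i → s j = s i) : p - 1 ≤ #{j | s j = s i ∧ t j = t i} := by
  have two_ne := zmod_two_ne_zero hp
  refine (sub_one_le_of_natCast_eq_neg_one (h.card_fiber_eq_neg_one two_ne hi hconst)).trans
    (card_le_card fun j hj => ?_)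
  have hj := (mem_filter.mp hj).2
  simp [hj, hconst j hj]

lemma sub_one_le_card_zero_fiber (h : IsDefectSystem s t) (hcard : Fintype.card ι = 2 * p - 1)
    {τ : ZMod p} (hτ : τ ≠ 0) (ht : ∀ i, t i ≠ 0 → t i = τ) : p - 1 ≤ #{i | s i = 0 ∧ t i = 0} := by
  have hsum := h.sum_right
  rw [← sum_filter_ne_zero, sum_congr rfl fun i hi => ht i (mem_filter.mp hi).2, sum_const,
    nsmul_eq_mul] at hsum
  obtain ⟨m, hm⟩ := (ZMod.natCast_eq_zero_iff _ _).mp ((mul_eq_zero.mp hsum).resolve_right hτ)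
  have hsplit : #{i | t i = 0} + #{i | t i ≠ 0} = 2 * p - 1 := by
    rw [card_filter_add_card_filter_not, card_univ, hcard]
  have hp2 := (Fact.out : p.Prime).two_le
  have hm_lt : m < 2 := by
    by_contra! hm_ge
    have := Nat.mul_le_mul_left p hm_ge
    omega
  have hzero : p - 1 ≤ #{i | t i = 0} := by
    have := Nat.mul_le_mul_left p (Nat.le_of_lt_succ hm_lt)
    omega
  refine hzero.trans (card_le_card fun i hi => ?_)
  have hi := (mem_filter.mp hi).2
  simp [hi, h.left_eq_zero i hi]

lemma sub_one_le_card_one_fiber (h : IsDefectSystem s t) {τ : ZMod p}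
    (hs : ∀ i, t i ≠ τ → s i = 0) (hs' : ∀ i, t i = τ → s i = 0 ∨ s i = 1) :
    p - 1 ≤ #{i | s i = 1 ∧ t i = τ} := by
  have hite : ∀ i, s i = if s i = 1 ∧ t i = τ then 1 else 0 := by
    intro i
    by_cases hi : t i = τ
    · rcases hs' i hi with hsi | hsi <;> simp [hi, hsi]
    · simp [hi, hs i hi]
  refine sub_one_le_of_natCast_eq_neg_one ?_
  rw [← h.sum_left, sum_congr rfl fun i _ => hite i, sum_boole]

theorem exists_sub_one_le_card_fiber (h : IsDefectSystem s t) (hp : p ≠ 2)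
    (hcard : Fintype.card ι = 2 * p - 1) : ∃ σ τ, p - 1 ≤ #{i | s i = σ ∧ t i = τ} := by
  have two_ne := zmod_two_ne_zero hp
  by_cases hconst : ∀ i j, t j = t i → s j = s i
  · obtain ⟨i, -, hi⟩ := exists_ne_zero_of_sum_ne_zero (h.sum_left.trans_ne (by simp))
    exact ⟨_, _, h.sub_one_le_card_fiber hp hi (hconst i)⟩
  push Not at hconst
  obtain ⟨i, j, htij, hsij⟩ := hconst
  have hti : t i ≠ 0 := fun hti =>
    hsij ((h.left_eq_zero j (htij.trans hti)).trans (h.left_eq_zero i hti).symm)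
  have hline : ∀ k, t k ≠ 0 → t k ≠ t i → 2 * s k * t i = (s j + s i - 1) * t k := fun k hk hki =>
    two_mul_mul_eq_of_pairDefect_eq_zero (htij ▸ h.pairDefect_eq_zero j k (htij ▸ hki.symm))
      (h.pairDefect_eq_zero i k hki.symm) hsij hk
  by_cases hoff : ∀ k, t k ≠ t i → s k = 0
  · by_cases hthird : ∃ k, t k ≠ 0 ∧ t k ≠ t i
    · obtain ⟨k, hk, hki⟩ := hthird
      exact ⟨_, _, h.sub_one_le_card_one_fiber hoff fun l hl =>
        eq_zero_or_eq_one_of_pairDefect_eq_zero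
          (hoff k hki ▸ h.pairDefect_eq_zero l k (hl ▸ hki.symm)) hk⟩
    · push Not at hthird
      exact ⟨_, _, h.sub_one_le_card_zero_fiber hcard hti hthird⟩
  · push Not at hoff
    obtain ⟨k, hki, hk⟩ := hoff
    have htk : t k ≠ 0 := mt (h.left_eq_zero k) hk
    refine ⟨_, _, h.sub_one_le_card_fiber hp hk fun l hl => ?_⟩
    refine mul_left_cancel₀ (mul_ne_zero two_ne hti) ?_
    have hl_line := hline l (hl ▸ htk) (hl ▸ hki)
    rw [hl] at hl_line
    linear_combination hl_line - hline k htk hki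

end IsDefectSystem

namespace IsMinimalZeroSum

variable {p : ℕ} [Fact p.Prime] {V ι : Type*} [AddCommGroup V] [Module (ZMod p) V] [Fintype ι]
  {g : ι → V}

lemma apply_eq_one_of_isCoordPair (hg : IsMinimalZeroSum g)
    (hV : Module.finrank (ZMod p) V = 2) (hcard : Fintype.card ι = 2 * p - 1) {i : ι}
    {x t : Module.Dual (ZMod p) V} (h : IsCoordPair x t (g i)) {k : ι} (hk : t (g k) = 0) :
    x (g k) = 1 := by
  obtain rfl | hki := eq_or_ne k i
  · exact h.left_apply
  · exact (hg.eq_of_smul_eq_smul hV hcard hki ((one_smul _ _).trans (h.eq_smul _ hk))).symm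

lemma det_ne_zero_of_isCoordPair (hg : IsMinimalZeroSum g)
    (hV : Module.finrank (ZMod p) V = 2) (hcard : Fintype.card ι = 2 * p - 1) {a : V}
    {x t : Module.Dual (ZMod p) V} (h : IsCoordPair x t a) {i j : ι} (hij : t (g i) ≠ t (g j)) :
    t (g j) * x (g i) - t (g i) * x (g j) ≠ 0 := by
  intro hdet
  have hsmul := h.smul_eq (g j) (g i)
  rw [hdet, zero_smul, add_zero] at hsmul
  have hne : i ≠ j := fun hij' => hij (by rw [hij'])
  exact hij (hg.eq_of_smul_eq_smul hV hcard hne hsmul).symm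

theorem exists_isCoordPair_and_isDefectSystem (hg : IsMinimalZeroSum g) (hp : p ≠ 2)
    (hV : Module.finrank (ZMod p) V = 2) (hcard : Fintype.card ι = 2 * p - 1) {i₀ j₀ : ι}
    (hne : i₀ ≠ j₀) (hj₀ : g j₀ = g i₀) :
    ∃ x t : Module.Dual (ZMod p) V, IsCoordPair x t (g i₀) ∧
      IsDefectSystem (fun l => 1 - x (g l)) (fun l => t (g l)) := by
  have two_ne := zmod_two_ne_zero hp
  obtain ⟨x, hxi₀, -, hforms⟩ := hg.exists_linearMap_and_forall_isTripleForm hp hV hcard hne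
  obtain ⟨t, h⟩ := exists_isCoordPair hV hxi₀
  have hx : ∀ k, t (g k) = 0 → 1 - x (g k) = 0 := fun k hk =>
    sub_eq_zero.mpr (hg.apply_eq_one_of_isCoordPair hV hcard h hk).symm
  have hform : ∀ k, t (g k) ≠ 0 → ∃ Q, IsTripleForm g i₀ j₀ k Q ∧ Q (g k) = x := fun k hk =>
    hforms k (fun hk' => hk (by rw [hk', h.right_apply]))
      (fun hk' => hk (by rw [hk', hj₀, h.right_apply]))
  refine ⟨x, t, h, ?_, ?_, hx, fun i j hij => ?_, fun i => ?_⟩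
  · rw [sum_sub_distrib, ← map_sum, hg.sum_eq_zero, map_zero, sum_const, card_univ, hcard,
      nsmul_one, Nat.cast_sub (by have := (Fact.out : p.Prime).two_le; omega)]
    simp
  · rw [← map_sum, hg.sum_eq_zero, map_zero]
  · by_cases hi : t (g i) = 0
    · simp [pairDefect, hi, hx i hi]
    by_cases hj : t (g j) = 0
    · simp [pairDefect, hj, hx j hj]
    obtain ⟨Qi, hQi, hxi⟩ := hform i hi
    obtain ⟨Qj, hQj, hxj⟩ := hform j hj
    obtain ⟨_, -, -, hforms'⟩ := hg.exists_linearMap_and_forall_isTripleForm hp hV hcard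
      (i := i₀) (j := i) (fun hi' => hi (by rw [← hi', h.right_apply]))
    obtain ⟨Q, hQ, -⟩ := hforms' j (fun hj' => hj (by rw [hj', h.right_apply]))
      (fun hj' => hij (by rw [hj']))
    exact h.pairDefect_eq_zero two_ne hj₀ hQ hQi hxi hQj hxj hi hj hij
      (hg.det_ne_zero_of_isCoordPair hV hcard h hij)
  · by_cases hi : t (g i) = 0
    · simp [pairDefect, hi, hx i hi]
    obtain ⟨Qi, hQi, hxi⟩ := hform i hi
    exact h.sum_pairDefect hj₀ hg.sum_eq_zero hQi hxi

/-- **Property B** for planes over `ZMod p`. -/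
theorem exists_sub_one_le_card_filter_eq [DecidableEq V] (hg : IsMinimalZeroSum g)
    (hV : Module.finrank (ZMod p) V = 2) (hcard : Fintype.card ι = 2 * p - 1) :
    ∃ f, p - 1 ≤ #{i | g i = f} := by
  obtain rfl | hp := eq_or_ne p 2
  · have : Nonempty ι := Fintype.card_pos_iff.mp (by omega)
    let i : ι := Classical.arbitrary ι
    exact ⟨g i, card_pos.mpr ⟨i, by simp⟩⟩
  obtain ⟨i₀, j₀, hne, hi₀⟩ := hg.exists_ne_map_eq hp hV hcard
  obtain ⟨x, t, h, hsystem⟩ :=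
    hg.exists_isCoordPair_and_isDefectSystem hp hV hcard hne hi₀.symm
  obtain ⟨σ, τ, hfiber⟩ := hsystem.exists_sub_one_le_card_fiber hp hcard
  have hp2 := (Fact.out : p.Prime).two_le
  obtain ⟨i, hi⟩ := card_pos.mp (show 0 < #{i | 1 - x (g i) = σ ∧ t (g i) = τ} by omega)
  refine ⟨g i, hfiber.trans (card_le_card fun j hj => ?_)⟩
  obtain ⟨hxi, hti⟩ := (mem_filter.mp hi).2
  obtain ⟨hxj, htj⟩ := (mem_filter.mp hj).2
  have hdiff := h.eq_smul (g j - g i) (by rw [map_sub, htj, hti, sub_self])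
  have hx : x (g j - g i) = 0 := by
    rw [map_sub]
    linear_combination hxi - hxj
  rw [hx, zero_smul, sub_eq_zero] at hdiff
  simpa using hdiff

section

variable {f : V} {A : Finset ι}

lemma exists_linearMap_of_notMem (hg : IsMinimalZeroSum g) (hV : Module.finrank (ZMod p) V = 2)
    (hcard : Fintype.card ι = 2 * p - 1) (hA : p - 1 ≤ A.card) (hAf : ∀ i ∈ A, g i = f) {i j : ι}
    (hij : i ≠ j) (hi : i ∉ A) (hj : j ∉ A) :
    ∃ φ : Module.Dual (ZMod p) V, φ f = 0 ∧ φ (g i) = 1 ∧ φ (g j) = 1 := by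
  classical
  obtain ⟨φ, -, hφ, hφf⟩ := hg.exists_linearMap_of_card_eq_two hV hcard (card_pair hij)
  refine ⟨φ, hφf f ?_, hφ i (by simp), hφ j (by simp)⟩
  refine Nat.le_add_of_sub_le (hA.trans (card_le_card fun l hl => ?_))
  simp [ne_of_mem_of_not_mem hl hi, ne_of_mem_of_not_mem hl hj, hAf l hl]

lemma apply_eq_one_of_notMem (hg : IsMinimalZeroSum g) (hV : Module.finrank (ZMod p) V = 2)
    (hcard : Fintype.card ι = 2 * p - 1) (hf : f ≠ 0) (hA : p - 1 ≤ A.card)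
    (hAf : ∀ i ∈ A, g i = f) {φ : Module.Dual (ZMod p) V} (hφ : φ f = 0) {i j : ι} (hi : i ∉ A)
    (hj : j ∉ A) (hφj : φ (g j) = 1) : φ (g i) = 1 := by
  obtain rfl | hij := eq_or_ne i j
  · exact hφj
  obtain ⟨ψ, hψf, hψi, hψj⟩ := hg.exists_linearMap_of_notMem hV hcard hA hAf hij hi hj
  have hψ : ψ ≠ 0 := by
    rintro rfl
    simp at hψi
  obtain ⟨c, hc⟩ := exists_eq_smul_of_apply_eq_zero hV hψ hf hψf
    (show ψ (g i - g j) = 0 by rw [map_sub, hψi, hψj, sub_self])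
  rw [← sub_add_cancel (g i) (g j), hc, map_add, map_smul, hφ, hφj, smul_zero, zero_add]

end

theorem exists_linearMap_eq_one_off (hg : IsMinimalZeroSum g)
    (hV : Module.finrank (ZMod p) V = 2) (hcard : Fintype.card ι = 2 * p - 1) :
    ∃ (f : V) (A : Finset ι) (φ : Module.Dual (ZMod p) V), f ≠ 0 ∧ φ f = 0 ∧ A.card = p - 1 ∧
      (∀ i ∈ A, g i = f) ∧ ∀ i ∉ A, φ (g i) = 1 := by
  classical
  have hp2 := (Fact.out : p.Prime).two_le
  obtain ⟨f, hf⟩ := hg.exists_sub_one_le_card_filter_eq hV hcard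
  obtain ⟨A, hA, hA_card⟩ := exists_subset_card_eq hf
  have hAf : ∀ i ∈ A, g i = f := fun i hi => (mem_filter.mp (hA hi)).2
  obtain ⟨i, hi⟩ := card_pos.mp (show 0 < A.card by omega)
  have hf_ne : f ≠ 0 := hAf i hi ▸ hg.ne_zero (by omega) i
  have hcompl : Aᶜ.card = p := by rw [card_compl]; omega
  obtain ⟨j, hj, k, hk, hjk⟩ := one_lt_card.mp (show 1 < Aᶜ.card by omega)
  rw [mem_compl] at hj hk
  obtain ⟨φ, hφf, hφj, -⟩ := hg.exists_linearMap_of_notMem hV hcard hA_card.ge hAf hjk hj hk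
  exact ⟨f, A, φ, hf_ne, hφf, hA_card, hAf, fun i hi =>
    hg.apply_eq_one_of_notMem hV hcard hf_ne hA_card.ge hAf hφf hi hj hφj⟩

end IsMinimalZeroSum

lemma exists_eq_map_univ_of_forall_mem_range {α β : Type*} {f : α → β} {M : Multiset β}
    (hM : ∀ y ∈ M, y ∈ Set.range f) {n : ℕ} (hn : M.card = n) :
    ∃ a : Fin n → α, M = (univ : Finset (Fin n)).val.map fun k => f (a k) := by
  obtain ⟨l, rfl⟩ := Quot.exists_rep M
  obtain rfl : l.length = n := hn
  choose a ha using fun k : Fin l.length => hM (l.get k) (l.get_mem k)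
  refine ⟨a, ?_⟩
  rw [funext ha, Fin.univ_val_map, List.ofFn_get]
  rfl

lemma map_univ_val_eq_map_add_map_compl {ι G : Type*} [Fintype ι] [DecidableEq ι] (A : Finset ι)
    (b : ι → G) : univ.val.map b = A.val.map b + Aᶜ.val.map b := by
  rw [← Multiset.map_add, ← disjUnion_val (h := disjoint_compl_right), disjUnion_eq_union,
    union_compl]

lemma ne_zero_of_forall_lt_sum_ne_zero {G : Type*} [AddCommMonoid G] {S : Multiset G}
    (hmin : ∀ T < S, T ≠ 0 → T.sum ≠ 0) (hcard : 1 < S.card) {e : G} (he : e ∈ S) : e ≠ 0 := by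
  have hlt : {e} < S := by
    refine lt_of_le_of_ne (Multiset.singleton_le.mpr he) fun h => ?_
    rw [← h, Multiset.card_singleton] at hcard
    exact lt_irrefl 1 hcard
  simpa using hmin {e} hlt (Multiset.singleton_ne_zero e)

section Quotient

variable {p : ℕ} {G : Type*} [AddCommGroup G] [Module (ZMod p) G]

lemma isMinimalZeroSum_mkQ [NeZero p] {ι : Type*} [Fintype ι] {e : G} {b : ι → G}
    (hsum : (Multiset.replicate (p - 1) e + univ.val.map b).sum = 0)
    (hmin : ∀ T < Multiset.replicate (p - 1) e + univ.val.map b, T ≠ 0 → T.sum ≠ 0) :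
    IsMinimalZeroSum fun i => (ZMod p ∙ e).mkQ (b i) := by
  refine ⟨?_, fun I hI hI_ne hI_sum => ?_⟩
  · rw [Multiset.sum_add, Multiset.sum_replicate] at hsum
    rw [← map_sum, Submodule.mkQ_apply, Submodule.Quotient.mk_eq_zero,
      Submodule.mem_span_singleton]
    refine ⟨-((p - 1 : ℕ) : ZMod p), ?_⟩
    rw [neg_smul, Nat.cast_smul_eq_nsmul, neg_eq_iff_add_eq_zero]
    exact hsum
  · rw [← map_sum, Submodule.mkQ_apply, Submodule.Quotient.mk_eq_zero,
      Submodule.mem_span_singleton] at hI_sum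
    obtain ⟨c, hc⟩ := hI_sum
    have hval : (-c).val ≤ p - 1 := Nat.le_sub_one_of_lt (ZMod.val_lt _)
    refine hmin (Multiset.replicate (-c).val e + I.val.map b) ?_ ?_ ?_
    · refine add_lt_add_of_le_of_lt (Multiset.replicate_le_replicate e |>.mpr hval) ?_
      exact Multiset.map_lt_map (val_lt_iff.mpr ((ssubset_univ_iff).mpr hI_ne))
    · intro h
      simp [hI.ne_empty] at h
    · rw [Multiset.sum_add, Multiset.sum_replicate, ← Nat.cast_smul_eq_nsmul (ZMod p),
        ZMod.natCast_zmod_val, neg_smul, hc]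
      exact neg_add_cancel _

lemma bijective_smul_add_smul_add_smul {K G : Type*} [Field K] [AddCommGroup G] [Module K G]
    (hG : Module.finrank K G = 3) {e₁ e₂ e₃ : G} (he₁ : e₁ ≠ 0) (he₂ : (K ∙ e₁).mkQ e₂ ≠ 0)
    {φ : Module.Dual K (G ⧸ K ∙ e₁)} (hφe₂ : φ ((K ∙ e₁).mkQ e₂) = 0)
    (hφe₃ : φ ((K ∙ e₁).mkQ e₃) ≠ 0) :
    Function.Bijective fun abc : K × K × K => abc.1 • e₁ + abc.2.1 • e₂ + abc.2.2 • e₃ := by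
  have := Module.finite_of_finrank_eq_succ hG
  let F : K × K × K →ₗ[K] G := ((LinearMap.toSpanSingleton K G e₁).coprod
    ((LinearMap.toSpanSingleton K G e₂).coprod (LinearMap.toSpanSingleton K G e₃)))
  have hF : ⇑F = fun abc : K × K × K => abc.1 • e₁ + abc.2.1 • e₂ + abc.2.2 • e₃ := by
    ext abc
    simp [F, add_assoc]
  have hinj : Function.Injective F := by
    refine (injective_iff_map_eq_zero F).mpr fun ⟨a, b, c⟩ habc => ?_
    have hquot : b • (K ∙ e₁).mkQ e₂ + c • (K ∙ e₁).mkQ e₃ = 0 := by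
      have hmk := congrArg (K ∙ e₁).mkQ habc
      have he₁_mk : (K ∙ e₁).mkQ e₁ = 0 := by simp
      simpa only [hF, map_add, map_smul, he₁_mk, smul_zero, zero_add, map_zero] using hmk
    have hc : c = 0 := by
      have hφ := congrArg φ hquot
      rw [map_add, map_smul, map_smul, hφe₂, smul_zero, zero_add, map_zero] at hφ
      exact (smul_eq_zero.mp hφ).resolve_right hφe₃
    have hb : b = 0 := by
      rw [hc, zero_smul, add_zero] at hquot
      exact (smul_eq_zero.mp hquot).resolve_right he₂
    have ha : a = 0 := by simpa [hF, hb, hc, he₁] using habc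
    rw [ha, hb, hc]
    rfl
  rw [← hF]
  refine ⟨hinj, (LinearMap.injective_iff_surjective_of_finrank_eq_finrank ?_).mp hinj⟩
  simp [hG]

lemma exists_adapted_basis [Fact p.Prime] (hG : Module.finrank (ZMod p) G = 3) {ι : Type*}
    [Fintype ι] (hcard : Fintype.card ι = 2 * p - 1) {e₁ : G} (he₁ : e₁ ≠ 0)
    {b : ι → G} (hb : IsMinimalZeroSum fun i => (ZMod p ∙ e₁).mkQ (b i)) :
    ∃ (e₂ e₃ : G) (A : Finset ι),
      (Function.Bijective fun abc : ZMod p × ZMod p × ZMod p =>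
        abc.1 • e₁ + abc.2.1 • e₂ + abc.2.2 • e₃) ∧ A.card = p - 1 ∧
      (∀ i ∈ A, ∃ α : ZMod p, α • e₁ + e₂ = b i) ∧
      ∀ i ∉ A, ∃ β γ : ZMod p, β • e₁ + γ • e₂ + e₃ = b i := by
  classical
  have hp2 := (Fact.out : p.Prime).two_le
  have := Module.finite_of_finrank_eq_succ hG
  have hV : Module.finrank (ZMod p) (G ⧸ ZMod p ∙ e₁) = 2 := by
    have := Submodule.finrank_quotient_add_finrank (ZMod p ∙ e₁)
    rw [finrank_span_singleton he₁] at this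
    omega
  obtain ⟨f, A, φ, hf, hφf, hA, hAf, hAφ⟩ := hb.exists_linearMap_eq_one_off hV hcard
  obtain ⟨e₂, rfl⟩ := (ZMod p ∙ e₁).mkQ_surjective f
  obtain ⟨j, hj⟩ := card_pos.mp (show 0 < Aᶜ.card by rw [card_compl]; omega)
  have hφj := hAφ j (mem_compl.mp hj)
  have hφ : φ ≠ 0 := by
    rintro rfl
    simp at hφj
  have hline {v w : G} (hvw : (ZMod p ∙ e₁).mkQ v = (ZMod p ∙ e₁).mkQ w) :
      ∃ c : ZMod p, c • e₁ + w = v := by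
    obtain ⟨c, hc⟩ := Submodule.mem_span_singleton.mp ((Submodule.Quotient.eq _).mp hvw)
    exact ⟨c, by rw [hc, sub_add_cancel]⟩
  refine ⟨e₂, b j, A, bijective_smul_add_smul_add_smul hG he₁ hf hφf (hφj.trans_ne one_ne_zero),
    hA, fun i hi => hline (hAf i hi), fun i hi => ?_⟩
  obtain ⟨γ, hγ⟩ := exists_eq_smul_of_apply_eq_zero hV hφ hf hφf
    (v := (ZMod p ∙ e₁).mkQ (b i - b j)) (by rw [map_sub, map_sub, hAφ i hi, hφj, sub_self])
  obtain ⟨β, hβ⟩ := hline (hγ.trans (map_smul _ γ e₂).symm)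
  exact ⟨β, γ, by rw [hβ, sub_add_cancel]⟩

lemma sum_replicate_add_map_add_map [NeZero p] (e₁ e₂ e₃ : G) (α : Fin (p - 1) → ZMod p)
    (β γ : Fin p → ZMod p) :
    (Multiset.replicate (p - 1) e₁ + univ.val.map (fun i => α i • e₁ + e₂) +
        univ.val.map fun i => β i • e₁ + γ i • e₂ + e₃).sum =
      (∑ i, α i + ∑ i, β i - 1) • e₁ + (∑ i, γ i - 1) • e₂ + (0 : ZMod p) • e₃ := by
  have hpred (v : G) : (p - 1) • v = -v := by
    rw [← Nat.cast_smul_eq_nsmul (ZMod p), Nat.cast_pred (NeZero.pos p), CharP.cast_eq_zero,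
      zero_sub, neg_one_smul]
  have hself (v : G) : p • v = 0 := by
    rw [← Nat.cast_smul_eq_nsmul (ZMod p), CharP.cast_eq_zero, zero_smul]
  simp only [Multiset.sum_add, Multiset.sum_replicate, sum_map_val, sum_add_distrib, ← sum_smul,
    sum_const, card_univ, Fintype.card_fin, hpred, hself]
  module

end Quotient

theorem stmt_7_general {p : ℕ} (hp : p.Prime) {G : Type*} [AddCommGroup G] [Module (ZMod p) G]
    [DecidableEq G] (hG : Module.finrank (ZMod p) G = 3) (S : Multiset G)
    (hlen : Multiset.card S = 3 * p - 2) (hsum : S.sum = 0)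
    (hmin : ∀ T < S, T ≠ 0 → T.sum ≠ 0) (e₁ : G) (he₁ : p - 1 ≤ S.count e₁) :
    ∃ e₂ e₃ : G,
      Function.Bijective (fun abc : ZMod p × ZMod p × ZMod p =>
        abc.1 • e₁ + abc.2.1 • e₂ + abc.2.2 • e₃) ∧
      ∃ (α : Fin (p - 1) → ZMod p) (β γ : Fin p → ZMod p),
        S = Multiset.replicate (p - 1) e₁ +
            Multiset.map (fun i => α i • e₁ + e₂) (Finset.univ : Finset (Fin (p - 1))).val +
            Multiset.map (fun i => β i • e₁ + γ i • e₂ + e₃) (Finset.univ : Finset (Fin p)).val ∧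
        (∑ i, α i) + (∑ i, β i) = 1 ∧ (∑ i, γ i) = 1 := by
  have := Fact.mk hp
  have hp2 := hp.two_le
  obtain ⟨S', rfl⟩ := le_iff_exists_add.mp (Multiset.le_count_iff_replicate_le.mp he₁)
  have he₁_ne : e₁ ≠ 0 := ne_zero_of_forall_lt_sum_ne_zero hmin (by omega)
    (Multiset.count_pos.mp (by omega))
  obtain ⟨b, rfl⟩ : ∃ b : Fin (2 * p - 1) → G, S' = univ.val.map b :=
    exists_eq_map_univ_of_forall_mem_range (f := id) (by simp) (by simp at hlen; omega)
  obtain ⟨e₂, e₃, A, hbij, hA, hAα, hAβγ⟩ :=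
    exists_adapted_basis hG (Fintype.card_fin _) he₁_ne (isMinimalZeroSum_mkQ hsum hmin)
  obtain ⟨α, hα⟩ := exists_eq_map_univ_of_forall_mem_range (f := fun α : ZMod p => α • e₁ + e₂)
    (M := A.val.map b) (by simpa using hAα) (by simpa using hA)
  obtain ⟨βγ, hβγ⟩ := exists_eq_map_univ_of_forall_mem_range
    (f := fun βγ : ZMod p × ZMod p => βγ.1 • e₁ + βγ.2 • e₂ + e₃) (n := p)
    (M := Aᶜ.val.map b) (by simpa using hAβγ) (by simp [card_compl, hA]; omega)
  rw [map_univ_val_eq_map_add_map_compl A, hα, hβγ, ← add_assoc] at hsum ⊢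
  refine ⟨e₂, e₃, hbij, α, fun i => (βγ i).1, fun i => (βγ i).2, rfl, ?_⟩
  rw [sum_replicate_add_map_add_map] at hsum
  have hzero := hbij.injective (a₁ := (_, _, _)) (a₂ := 0) (hsum.trans (by simp))
  simpa [sub_eq_zero] using hzero

/-- Structure of a minimal zero-sum sequence of length `3p-2` over `(ℤ/pℤ)³` containing
an element `e₁` with multiplicity at least `p-1`. -/
theorem stmt_7 (p : ℕ) (hp : p.Prime)
    (S : Multiset (ZMod p × ZMod p × ZMod p))
    (hlen : Multiset.card S = 3 * p - 2)
    (hne : S ≠ 0) (hsum : S.sum = 0)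
    (hmin : ∀ T < S, T ≠ 0 → T.sum ≠ 0)
    (e₁ : ZMod p × ZMod p × ZMod p) (he₁ : p - 1 ≤ S.count e₁) :
    ∃ e₂ e₃ : ZMod p × ZMod p × ZMod p,
      Function.Bijective (fun abc : ZMod p × ZMod p × ZMod p =>
        abc.1 • e₁ + abc.2.1 • e₂ + abc.2.2 • e₃) ∧
      ∃ (α : Fin (p - 1) → ZMod p) (β γ : Fin p → ZMod p),
        S = Multiset.replicate (p - 1) e₁ +
            Multiset.map (fun i => α i • e₁ + e₂) (Finset.univ : Finset (Fin (p - 1))).val +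
            Multiset.map (fun i => β i • e₁ + γ i • e₂ + e₃) (Finset.univ : Finset (Fin p)).val ∧
        (∑ i, α i) + (∑ i, β i) = 1 ∧ (∑ i, γ i) = 1 := by
  have := Fact.mk hp
  exact stmt_7_general hp (by simp) S hlen hsum hmin e₁ he₁
end
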